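/- Let g be a classical semisimple restricted Lie algebra over k. Then the variety E(2,g) of two-dimensional elementary abelian subalgebras of g is connected. -/

import Mathlib

noncomputable section

namespace ElemAb

variable (p : ℕ) (k : Type) [Field k]

/-- The algebra of polynomial functions on a `k`-vector space `V`: the subalgebra of
`V → k` generated by the linear functionals. -/
def polyFuns (V : Type) [AddCommGroup V] [Module k V] : Subalgebra k (V → k) :=
  Algebra.adjoin k {f : V → k | ∃ φ : V →ₗ[k] k, f = ⇑φ}

/-- The Zariski topology on a `k`-vector space: the topology generated by the complements of
zero sets of polynomial functions. -/
def zar (V : Type) [AddCommGroup V] [Module k V] : TopologicalSpace V :=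
  TopologicalSpace.generateFrom {U | ∃ f ∈ polyFuns k V, U = {x | f x ≠ 0}}

variable (L : Type) [LieRing L] [LieAlgebra k L]

/-- A restricted Lie algebra structure (`p`-map) on the Lie algebra `L`:  a map
`x ↦ x^[p]` having the formal properties of a `p`-th power map, namely
`(t • x)^[p] = t^p • x^[p]`, additivity on commuting elements (and, in general, additivity up
to a correction term lying in the subalgebra generated by the two elements), and
`ad (x^[p]) = (ad x)^p`. -/
structure pStructure : Type where
  pmap : L → L
  pmap_smul : ∀ (t : k) (x : L), pmap (t • x) = t ^ p • pmap x
  pmap_add_of_comm : ∀ x y : L, ⁅x, y⁆ = 0 → pmap (x + y) = pmap x + pmap y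
  pmap_add_mem : ∀ x y : L, pmap (x + y) - pmap x - pmap y ∈ LieSubalgebra.lieSpan k L {x, y}
  ad_pmap : ∀ x y : L, ⁅pmap x, y⁆ = ((LieAlgebra.ad k L x) ^ p) y

variable {p k L}

/-- The (restricted) nullcone `V(g) = {x | x^[p] = 0}`. -/
def pStructure.null (P : pStructure p k L) : Set L := {x | P.pmap x = 0}

/-- A submodule is an elementary abelian subalgebra if it is abelian (hence a subalgebra) and
the `p`-map vanishes on it. -/
def pStructure.IsElemAbelian (P : pStructure p k L) (e : Submodule k L) : Prop :=
  (∀ x ∈ e, ∀ y ∈ e, ⁅x, y⁆ = (0 : L)) ∧ ∀ x ∈ e, P.pmap x = 0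

/-- `E(r, g)`: the `r`-dimensional elementary abelian subalgebras contained in the carrier
set `g` (take `g = Set.univ` for the whole algebra), as a set of submodules. -/
def pStructure.elemSet (P : pStructure p k L) (g : Set L) (r : ℕ) : Set (Submodule k L) :=
  {e | (e : Set L) ⊆ g ∧ Module.finrank k ↥e = r ∧ P.IsElemAbelian e}

/-- Pairs of linearly independent vectors spanning a member of a given collection `C` of
two-dimensional subspaces. -/
def planePairs (C : Set (Submodule k L)) : Set (L × L) :=
  {z | LinearIndependent k ![z.1, z.2] ∧ Submodule.span k (Set.range ![z.1, z.2]) ∈ C}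

/-- The canonical (quotient) map from spanning pairs to planes. -/
def planeMk (C : Set (Submodule k L)) (z : planePairs C) : ↥C :=
  ⟨Submodule.span k (Set.range ![z.val.1, z.val.2]), z.prop.2⟩

/-- The Zariski topology on a collection of two-dimensional subspaces (e.g. `E(2,g)` or
`Gr₂(g)^{V(g)}`), defined as the quotient topology induced from the Zariski topology on the
variety of spanning pairs. -/
def planeTop (C : Set (Submodule k L)) : TopologicalSpace ↥C :=
  TopologicalSpace.coinduced (planeMk C)
    (TopologicalSpace.induced Subtype.val (zar k (L × L)))

/-- The statement that the projective variety `E(2, g)` is connected (the empty space counts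
as connected). -/
def pStructure.EIsConnected (P : pStructure p k L) (g : Set L) : Prop :=
  @IsPreconnected ↥(P.elemSet g 2) (planeTop (P.elemSet g 2)) Set.univ

/-- `N_i(g) = {x | (ad x)^i = 0}`. -/
def Ncal (i : ℕ) : Set L := {x | (LieAlgebra.ad k L x) ^ i = 0}

/-- The truncated exponential `exp x = ∑_{i<p} (ad x)^i / i!`. -/
def expAd (x : L) : Module.End k L :=
  ∑ i ∈ Finset.range p, (i.factorial : k)⁻¹ • ((LieAlgebra.ad k L x) ^ i)

/-- Automorphisms of the Lie algebra `L` (as linear endomorphisms). -/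
def IsLieAut (f : Module.End k L) : Prop :=
  Function.Bijective f ∧ ∀ x y : L, f ⁅x, y⁆ = ⁅f x, f y⁆

/-- Automorphisms of the restricted Lie algebra `(L, [p])`, i.e. automorphisms commuting with
the `p`-map (the group `Aut_p(g)`). -/
def pStructure.IspAut (P : pStructure p k L) (f : Module.End k L) : Prop :=
  IsLieAut f ∧ ∀ x : L, f (P.pmap x) = P.pmap (f x)

/-- A restricted Lie algebra is admissible if `N₃(g) ⊆ V(g)` and `exp(N₃(g)) ⊆ Aut_p(g)`. -/
def pStructure.IsAdmissible (P : pStructure p k L) : Prop :=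
  Ncal (k := k) 3 ⊆ P.null ∧ ∀ x ∈ Ncal (k := k) (L := L) 3, P.IspAut (expAd (p := p) x)


section Classical

variable (k L) [FiniteDimensional k L]

/-- The root space (eigenspace of the adjoint action) of a subalgebra `H` for the linear
form `α` on `H`. -/
def rootSp (H : LieSubalgebra k L) (α : Module.Dual k ↥H) : Submodule k L where
  carrier := {x | ∀ h : ↥H, ⁅(h : L), x⁆ = α h • x}
  add_mem' := by
    intro a b ha hb h
    rw [lie_add, ha h, hb h, smul_add]
  zero_mem' := by intro h; simp
  smul_mem' := by
    intro c x hx h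
    rw [lie_smul, hx h, smul_comm]

/-- Seligman's axiomatic characterization of the classical (semi-)simple Lie algebras in
characteristic `p ≥ 3`:  trivial center, perfectness, and the existence of an abelian Cartan
subalgebra `H` giving a root space decomposition with one-dimensional root spaces
`g_α` (`α ≠ 0`), with `[g_α, g_{-α}]` one-dimensional and with proper root strings. -/
def IsClassicalLie : Prop :=
  LieAlgebra.center k L = ⊥ ∧
  ⁅(⊤ : LieIdeal k L), (⊤ : LieIdeal k L)⁆ = ⊤ ∧
  ∃ H : LieSubalgebra k L, H.IsCartanSubalgebra ∧ IsLieAbelian ↥H ∧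
    (⨆ α : Module.Dual k ↥H, rootSp k L H α) = ⊤ ∧
    (∀ α : Module.Dual k ↥H, α ≠ 0 → rootSp k L H α ≠ ⊥ →
      Module.finrank k ↥(rootSp k L H α) = 1) ∧
    (∀ α : Module.Dual k ↥H, α ≠ 0 → rootSp k L H α ≠ ⊥ →
      Module.finrank k ↥(Submodule.span k
        {z : L | ∃ x ∈ rootSp k L H α, ∃ y ∈ rootSp k L H (-α), ⁅x, y⁆ = z}) = 1) ∧
    (∀ α : Module.Dual k ↥H, α ≠ 0 → rootSp k L H α ≠ ⊥ →
      ∀ β : Module.Dual k ↥H, rootSp k L H β ≠ ⊥ →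
        ∃ n : ℕ, rootSp k L H (β + n • α) = ⊥)

/-- A Lie algebra is classical semisimple if it is the direct sum of ideals each of which is
a simple Lie algebra of classical type. -/
def IsClassicalSemisimple : Prop :=
  ∃ (ι : Type) (_ : Fintype ι) (I : ι → LieIdeal k L),
    (∀ i, LieAlgebra.IsSimple k ↥(I i) ∧ IsClassicalLie k ↥(I i)) ∧
    iSupIndep I ∧ iSup I = ⊤

end Classical
end ElemAb

open ElemAb

/-!
Planes are moved along polynomial curves: such a curve in the variety of elementary abelian pairs is
an image of the affine line, hence irreducible, so the planes it passes through lie in one connected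
component.

Let `c ≠ 0` satisfy `(ad c)³ = 0`. For `p ≥ 5` the maps `exp(t ad c) = 1 + t ad c + (t² / 2)(ad c)²`
are automorphisms, and their orbits, rescaled, extend polynomially to `t = ∞`. The limit of an
elementary plane is elementary; choosing bases of the plane adapted to `ker (ad c)` and
`ker (ad c)²`, one reaches in this way a plane `⟨u, v⟩` with `[c, u] = 0`, and then one with also
`[c, v] ∈ ⟨u⟩`. If `c` is not in this plane, the segment from `v` to `c` gives elementary planes
`⟨u, s v + (1 - s) c⟩`: here `[c, v]` commutes with both `c` and `v`, so the `p`-th power is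
additive on the combinations of `ad c` and `ad v`. Hence every elementary plane is linked to one
through `c`. If `c'` commutes with `c`, is independent of it and satisfies `(ad c')³ = 0`, a second
round with `c'`, which fixes `c`, links every elementary plane to `⟨c, c'⟩`.

The existence of `c` and `c'` is a matter of root strings. A root vector at the top of a longest
string in the direction of some root has vanishing cube, and a second one commuting with it is
found among the roots of weight `2` or `1` for the first. If there is no such root, a simple algebra
is `sl₂`, where commuting elements are proportional, so there are no elementary planes; in a sum of
two or more simple ideals `c` and `c'` can be taken in different summands.
-/

namespace ElemAb

open LieAlgebra (ad)

section Depth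

variable {k V : Type*} [Field k] [AddCommGroup V] [Module k V]

/-- The depth of `x` under `T`: the largest exponent `q` with `T ^ q x ≠ 0`. For `T = ad e` with
`e` a root vector, it is the length of the half-string through `x` in the direction of `e`. -/
def IsDepth (T : Module.End k V) (x : V) (q : ℕ) : Prop :=
  (T ^ q) x ≠ 0 ∧ (T ^ (q + 1)) x = 0

namespace IsDepth

variable {T : Module.End k V} {x : V} {q : ℕ}

theorem pow_apply_eq_zero_iff (h : IsDepth T x q) {i : ℕ} : (T ^ i) x = 0 ↔ q < i := by
  refine ⟨fun hi => ?_, fun hi => Module.End.pow_map_zero_of_le hi h.2⟩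
  by_contra! hle
  exact h.1 (Module.End.pow_map_zero_of_le hle hi)

theorem pow_apply_ne_zero_iff (h : IsDepth T x q) {i : ℕ} : (T ^ i) x ≠ 0 ↔ i ≤ q := by
  rw [Ne, h.pow_apply_eq_zero_iff, not_lt]

end IsDepth

theorem isDepth_zero_iff {T : Module.End k V} {x : V} : IsDepth T x 0 ↔ x ≠ 0 ∧ T x = 0 := by
  simp [IsDepth]

theorem IsDepth.isDepth_zero_pow_apply {T : Module.End k V} {x : V} {q : ℕ} (h : IsDepth T x q) :
    IsDepth T ((T ^ q) x) 0 :=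
  isDepth_zero_iff.mpr ⟨h.1, by rw [← Module.End.mul_apply, ← pow_succ']; exact h.2⟩

theorem exists_isDepth {T : Module.End k V} {x : V} {n : ℕ} (hx : x ≠ 0) (h : (T ^ n) x = 0) :
    ∃ q, IsDepth T x q := by
  induction n with
  | zero => exact absurd (by simpa using h) hx
  | succ n ih =>
    by_cases hn : (T ^ n) x = 0
    · exact ih hn
    · exact ⟨n, hn, h⟩

end Depth

section StringWeight

variable {k V : Type*} [Field k] [AddCommGroup V] [Module k V]
variable {E F D : Module.End k V} {a μ c : k} {x : V}

theorem weight_lowering_pow (hF : ∀ v, D (F v) = F (D v) - a • F v) (hx : D x = μ • x) (i : ℕ) :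
    D ((F ^ i) x) = (μ - i * a) • (F ^ i) x := by
  induction i with
  | zero => simp [hx]
  | succ i ih =>
    rw [pow_succ', Module.End.mul_apply, hF, ih, map_smul, ← sub_smul]
    congr 1
    push_cast
    ring

variable [NeZero (2 : k)]

theorem raising_lowering_pow (hEF : ∀ v, E (F v) = F (E v) + D v)
    (hF : ∀ v, D (F v) = F (D v) - a • F v) (hx : D x = μ • x) (hc : F (E x) = c • x) (i : ℕ) :
    E ((F ^ (i + 1)) x) = (c + (i + 1) * μ - a * (i * (i + 1)) / 2) • (F ^ i) x := by
  induction i with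
  | zero => simp [hEF, hc, hx, add_smul]
  | succ i ih =>
    rw [pow_succ', Module.End.mul_apply, hEF, ih, map_smul, weight_lowering_pow hF hx,
      ← Module.End.mul_apply F, ← pow_succ', ← add_smul]
    congr 1
    have := two_ne_zero (α := k)
    push_cast
    field_simp
    ring

/-- The relation at the end of each of the two half-strings through `x` is a linear equation in
`μ` and `c`; together they determine both. -/
theorem weight_eq_of_isDepth (hEF : ∀ v, E (F v) = F (E v) + D v)
    (hE : ∀ v, D (E v) = E (D v) + a • E v) (hF : ∀ v, D (F v) = F (D v) - a • F v)
    (hx : D x = μ • x) (hc : F (E x) = c • x) {q r : ℕ} (hq : IsDepth E x q)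
    (hr : IsDepth F x r) (hqr : (r + q + 1 : k) ≠ 0) :
    2 * μ = a * (r - q) ∧ 2 * c = a * (q * (r + 1)) := by
  have h2 := two_ne_zero (α := k)
  have hbottom := raising_lowering_pow hEF hF hx hc r
  rw [hr.2, map_zero] at hbottom
  have hbottom := (smul_eq_zero.mp hbottom.symm).resolve_right hr.1
  have htop := raising_lowering_pow (E := F) (F := E) (D := -D) (a := a) (μ := -μ) (c := c + μ)
    (fun v => by rw [hEF, LinearMap.neg_apply]; abel)
    (fun v => by simp only [LinearMap.neg_apply, hE, map_neg]; abel)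
    (by rw [LinearMap.neg_apply, hx, neg_smul]) (by rw [hEF, hc, hx, add_smul]) q
  rw [hq.2, map_zero] at htop
  have htop := (smul_eq_zero.mp htop.symm).resolve_right hq.1
  field_simp at hbottom htop
  have hμ : 2 * μ = a * (r - q) := by
    apply mul_left_cancel₀ hqr
    linear_combination hbottom - htop
  exact ⟨hμ, by linear_combination htop + q * hμ⟩

end StringWeight

section NatCast

variable {k : Type*} {p : ℕ}

theorem natCast_ne_zero_of_lt [AddMonoidWithOne k] [CharP k p] {n : ℕ} (h0 : 0 < n) (hn : n < p) :
    (n : k) ≠ 0 := by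
  rw [Ne, CharP.cast_eq_zero_iff k p]
  exact Nat.not_dvd_of_pos_of_lt h0 hn

theorem eq_of_natCast_eq_zero [AddMonoidWithOne k] [CharP k p] {n : ℕ} (h0 : 0 < n)
    (hn : n < 2 * p) (h : (n : k) = 0) : n = p := by
  obtain ⟨d, rfl⟩ := (CharP.cast_eq_zero_iff k p n).mp h
  have hd : d < 2 := by
    by_contra! hd
    nlinarith
  have hd0 : d ≠ 0 := by
    rintro rfl
    simp at h0
  rw [show d = 1 by omega, mul_one]

theorem intCast_inj_of_abs_lt [AddGroupWithOne k] [CharP k p] {m n : ℤ} (hmn : |m - n| < p)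
    (h : (m : k) = n) : m = n := by
  have hdvd : ((p : ℤ) ∣ m - n) := by
    rw [← CharP.intCast_eq_zero_iff k p, Int.cast_sub, h, sub_self]
  exact sub_eq_zero.mp (Int.eq_zero_of_abs_lt_dvd hdvd hmn)

end NatCast

section Roots

variable {k M : Type} [Field k] [LieRing M] [LieAlgebra k M] {H : LieSubalgebra k M}
variable {α β δ : Module.Dual k H} {x y e f : M} {h : H}

/-- `α` is a root: a nonzero weight with nonzero root space. -/
def IsRoot (H : LieSubalgebra k M) (α : Module.Dual k H) : Prop :=
  α ≠ 0 ∧ rootSp k M H α ≠ ⊥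

/-- A Cartan subalgebra whose root spaces satisfy Seligman's axioms for a classical Lie algebra in
characteristic `p`. A string of weights in the direction of a root is `p`-periodic, so the string
axiom bounds the position of its first gap by `p`. -/
structure IsClassicalCartan (p : ℕ) (H : LieSubalgebra k M) : Prop where
  center_eq_bot : LieAlgebra.center k M = ⊥
  cartan : H.IsCartanSubalgebra
  iSup_rootSp : ⨆ α : Module.Dual k H, rootSp k M H α = ⊤
  finrank_rootSp : ∀ {α : Module.Dual k H}, IsRoot H α → Module.finrank k (rootSp k M H α) = 1
  finrank_bracket : ∀ {α : Module.Dual k H}, IsRoot H α →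
    Module.finrank k (Submodule.span k
      {z : M | ∃ x ∈ rootSp k M H α, ∃ y ∈ rootSp k M H (-α), ⁅x, y⁆ = z}) = 1
  exists_rootSp_eq_bot : ∀ {α : Module.Dual k H}, IsRoot H α → ∀ β : Module.Dual k H,
    ∃ n < p, rootSp k M H (β + n • α) = ⊥

theorem rootSp_ne_bot_of_mem (hx : x ∈ rootSp k M H α) (h0 : x ≠ 0) : rootSp k M H α ≠ ⊥ :=
  (Submodule.ne_bot_iff _).mpr ⟨x, hx, h0⟩

theorem IsRoot.of_mem (hα : α ≠ 0) (hx : x ∈ rootSp k M H α) (h0 : x ≠ 0) : IsRoot H α :=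
  ⟨hα, rootSp_ne_bot_of_mem hx h0⟩

theorem IsRoot.exists_ne_zero (hα : IsRoot H α) : ∃ x ∈ rootSp k M H α, x ≠ 0 :=
  (Submodule.ne_bot_iff _).mp hα.2

theorem lie_mem_rootSp (hx : x ∈ rootSp k M H α) (hy : y ∈ rootSp k M H β) :
    ⁅x, y⁆ ∈ rootSp k M H (β + α) := by
  intro h
  rw [leibniz_lie, hx h, hy h, smul_lie, lie_smul, LinearMap.add_apply, add_smul, add_comm]

theorem ad_pow_mem_rootSp (he : e ∈ rootSp k M H α) (hx : x ∈ rootSp k M H δ) (i : ℕ) :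
    (ad k M e ^ i) x ∈ rootSp k M H (δ + i • α) := by
  induction i with
  | zero => simpa using hx
  | succ i ih =>
    rw [pow_succ', Module.End.mul_apply, LieAlgebra.ad_apply, add_smul, one_smul, ← add_assoc]
    exact lie_mem_rootSp he ih

theorem rootSp_ne_bot_of_ad_pow_ne_zero (he : e ∈ rootSp k M H α) (hx : x ∈ rootSp k M H δ)
    {i q : ℕ} (hiq : i ≤ q) (hq : (ad k M e ^ q) x ≠ 0) :
    rootSp k M H (δ + i • α) ≠ ⊥ :=
  rootSp_ne_bot_of_mem (ad_pow_mem_rootSp he hx i) fun h => hq (Module.End.pow_map_zero_of_le hiq h)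

namespace IsClassicalCartan

variable {p : ℕ} (S : IsClassicalCartan p H)
include S

theorem mem_of_mem_rootSp_zero (hx : x ∈ rootSp k M H 0) : x ∈ H := by
  rw [← S.cartan.self_normalizing, LieSubalgebra.mem_normalizer_iff]
  intro y hy
  rw [← lie_skew, hx ⟨y, hy⟩]
  simp

theorem exists_eq_smul (hα : IsRoot H α) (hx : x ∈ rootSp k M H α) (h0 : x ≠ 0)
    (hy : y ∈ rootSp k M H α) : ∃ t : k, y = t • x := by
  obtain ⟨t, ht⟩ := (finrank_eq_one_iff_of_nonzero' (⟨x, hx⟩ : rootSp k M H α)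
    (by simpa using h0)).mp (S.finrank_rootSp hα) ⟨y, hy⟩
  exact ⟨t, (congrArg Subtype.val ht).symm⟩

theorem induction_rootSp {P : M → Prop} (h_zero : P 0) (h_add : ∀ x y, P x → P y → P (x + y))
    (h_mem : ∀ (α : Module.Dual k H), ∀ x ∈ rootSp k M H α, P x) (x : M) : P x :=
  Submodule.iSup_induction _ (motive := P) (S.iSup_rootSp ▸ Submodule.mem_top) h_mem h_zero h_add

theorem end_eq_zero {T : Module.End k M}
    (hT : ∀ (α : Module.Dual k H), ∀ x ∈ rootSp k M H α, T x = 0) : T = 0 := by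
  ext x
  refine S.induction_rootSp (P := fun x => T x = 0) (map_zero T) (fun x y hx hy => ?_) hT x
  rw [map_add, hx, hy, add_zero]

theorem exists_lie_ne_zero (hα : IsRoot H α) :
    ∃ x ∈ rootSp k M H α, ∃ y ∈ rootSp k M H (-α), ⁅x, y⁆ ≠ 0 := by
  by_contra! hzero
  have hspan : Submodule.span k
      {z : M | ∃ x ∈ rootSp k M H α, ∃ y ∈ rootSp k M H (-α), ⁅x, y⁆ = z} = ⊥ := by
    rw [Submodule.span_eq_bot]
    rintro z ⟨x, hx, y, hy, rfl⟩
    exact hzero x hx y hy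
  have hrank := S.finrank_bracket hα
  rw [hspan, finrank_bot] at hrank
  exact zero_ne_one hrank

theorem isRoot_neg (hα : IsRoot H α) : IsRoot H (-α) := by
  obtain ⟨x, -, y, hy, hxy⟩ := S.exists_lie_ne_zero hα
  refine .of_mem (neg_ne_zero.mpr hα.1) hy ?_
  rintro rfl
  exact hxy (lie_zero x)

theorem string_length_lt_of_ne_bot (hα : IsRoot H α) {q r : ℕ}
    (hdown : ∀ i ≤ r, rootSp k M H (δ - i • α) ≠ ⊥) (hup : ∀ i ≤ q, rootSp k M H (δ + i • α) ≠ ⊥) :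
    r + q + 1 < p := by
  obtain ⟨n, hn, hgap⟩ := S.exists_rootSp_eq_bot hα (δ - r • α)
  by_contra! hle
  rcases le_total n r with hnr | hrn
  · obtain ⟨i, rfl⟩ := Nat.exists_eq_add_of_le hnr
    refine hdown i (by omega) (hgap ▸ congrArg _ ?_)
    module
  · obtain ⟨i, rfl⟩ := Nat.exists_eq_add_of_le hrn
    refine hup i (by omega) (hgap ▸ congrArg _ ?_)
    module

theorem string_length_lt (hα : IsRoot H α) (he : e ∈ rootSp k M H α)
    (hf : f ∈ rootSp k M H (-α)) (hx : x ∈ rootSp k M H δ) {q r : ℕ}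
    (hq : (ad k M e ^ q) x ≠ 0) (hr : (ad k M f ^ r) x ≠ 0) :
    r + q + 1 < p := by
  refine S.string_length_lt_of_ne_bot hα (δ := δ) (fun i hi => ?_)
    fun i hi => rootSp_ne_bot_of_ad_pow_ne_zero he hx hi hq
  convert rootSp_ne_bot_of_ad_pow_ne_zero hf hx hi hr using 2
  rw [smul_neg, sub_eq_add_neg]

theorem ad_pow_eq_zero (hα : IsRoot H α) (he : e ∈ rootSp k M H α) :
    ad k M e ^ (p - 1) = 0 := by
  refine S.end_eq_zero fun δ x hx => ?_
  by_contra hne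
  have h0 : x ≠ 0 := by
    rintro rfl
    exact hne (map_zero _)
  have := S.string_length_lt hα he (Submodule.zero_mem _) hx hne (r := 0) h0
  omega

theorem exists_isDepth (hα : IsRoot H α) (he : e ∈ rootSp k M H α) (h0 : x ≠ 0) :
    ∃ q, IsDepth (ad k M e) x q :=
  ElemAb.exists_isDepth h0 (n := p - 1) (by rw [S.ad_pow_eq_zero hα he, LinearMap.zero_apply])

end IsClassicalCartan
end Roots

section Triples

variable {k M : Type} [Field k] [LieRing M] [LieAlgebra k M] {H : LieSubalgebra k M}
variable {α β δ : Module.Dual k H} {x y e f e' f' : M} {h h' : H}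

/-- An `sl₂`-triple attached to the root `α`. -/
structure IsRootTriple (H : LieSubalgebra k M) (α : Module.Dual k H) (e f : M) (h : H) : Prop where
  mem_pos : e ∈ rootSp k M H α
  mem_neg : f ∈ rootSp k M H (-α)
  isSl2Triple : IsSl2Triple (h : M) e f

namespace IsRootTriple

theorem symm (t : IsRootTriple H α e f h) : IsRootTriple H (-α) f e (-h) where
  mem_pos := t.mem_neg
  mem_neg := by rw [neg_neg]; exact t.mem_pos
  isSl2Triple := t.isSl2Triple.symm

variable (t : IsRootTriple H α e f h)
include t

theorem e_ne_zero : e ≠ 0 := t.isSl2Triple.e_ne_zero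

theorem f_ne_zero : f ≠ 0 := t.isSl2Triple.f_ne_zero

theorem lie_e_f : ⁅e, f⁆ = (h : M) := t.isSl2Triple.lie_e_f

theorem lie_h_e : ⁅(h : M), e⁆ = (2 : k) • e := t.isSl2Triple.lie_h_e_smul k

theorem apply_eq_two : α h = 2 :=
  smul_left_injective k t.e_ne_zero ((t.mem_pos h).symm.trans t.lie_h_e)

variable [NeZero (2 : k)]

theorem isRoot : IsRoot H α := by
  refine .of_mem ?_ t.mem_pos t.e_ne_zero
  rintro rfl
  exact two_ne_zero (α := k) t.apply_eq_two.symm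

theorem ad_sq_f_ne_zero : (ad k M e ^ 2) f ≠ 0 := by
  rw [pow_two, Module.End.mul_apply, LieAlgebra.ad_apply, LieAlgebra.ad_apply, t.lie_e_f,
    ← lie_skew, t.lie_h_e]
  exact neg_ne_zero.mpr (smul_ne_zero two_ne_zero t.e_ne_zero)

end IsRootTriple

namespace IsClassicalCartan

variable {p : ℕ} [CharP k p] [NeZero (2 : k)] (S : IsClassicalCartan p H)
include S

theorem two_mul_weight_eq (hα : IsRoot H α) (he : e ∈ rootSp k M H α)
    (hf : f ∈ rootSp k M H (-α)) (hef : ⁅e, f⁆ = (h : M)) (hδ : IsRoot H δ)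
    (hx : x ∈ rootSp k M H δ) (h0 : x ≠ 0) {q r : ℕ} (hq : IsDepth (ad k M e) x q)
    (hr : IsDepth (ad k M f) x r) :
    2 * δ h = α h * (r - q) ∧
      ∃ c : k, ⁅f, ⁅e, x⁆⁆ = c • x ∧ 2 * c = α h * (q * (r + 1)) := by
  have hlt := S.string_length_lt hα he hf hx hq.1 hr.1
  have hne : (r + q + 1 : k) ≠ 0 := by
    exact_mod_cast natCast_ne_zero_of_lt (k := k) (Nat.succ_pos (r + q)) hlt
  obtain ⟨c, hc⟩ : ∃ c : k, ⁅f, ⁅e, x⁆⁆ = c • x := by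
    refine S.exists_eq_smul hδ hx h0 ?_
    have := lie_mem_rootSp hf (lie_mem_rootSp he hx)
    rwa [add_assoc, add_neg_cancel, add_zero] at this
  obtain ⟨hμ, hc'⟩ := weight_eq_of_isDepth (E := ad k M e) (F := ad k M f)
    (D := ad k M (h : M)) (a := α h) (μ := δ h) (c := c)
    (fun v => by
      simp only [LieAlgebra.ad_apply]
      rw [leibniz_lie, hef, add_comm])
    (fun v => by
      simp only [LieAlgebra.ad_apply]
      rw [leibniz_lie, he h, smul_lie, add_comm])
    (fun v => by
      simp only [LieAlgebra.ad_apply]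
      rw [leibniz_lie, hf h, smul_lie, LinearMap.neg_apply, neg_smul]
      abel)
    (hx h) hc hq hr hne
  exact ⟨hμ, c, hc, hc'⟩

/-- Were `α h = 0`, every root would vanish at `h`, making `h` central. -/
theorem apply_ne_zero_of_lie_eq (hα : IsRoot H α) (he : e ∈ rootSp k M H α)
    (hf : f ∈ rootSp k M H (-α)) (hef : ⁅e, f⁆ = (h : M)) (h0 : (h : M) ≠ 0) : α h ≠ 0 := by
  intro hαh
  have had : ad k M (h : M) = 0 := by
    refine S.end_eq_zero fun δ x hx => ?_
    rw [LieAlgebra.ad_apply, hx h]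
    by_cases hδ : δ = 0
    · simp [hδ]
    by_cases hx0 : x = 0
    · simp [hx0]
    obtain ⟨q, hq⟩ := S.exists_isDepth hα he hx0
    obtain ⟨r, hr⟩ := S.exists_isDepth (S.isRoot_neg hα) hf hx0
    have hweight := (S.two_mul_weight_eq hα he hf hef (.of_mem hδ hx hx0) hx hx0 hq hr).1
    rw [hαh, zero_mul] at hweight
    rw [(mul_eq_zero.mp hweight).resolve_left two_ne_zero, zero_smul]
  have hcenter : (h : M) ∈ LieAlgebra.center k M := by
    rw [LieModule.mem_maxTrivSubmodule]
    intro m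
    rw [← lie_skew, ← LieAlgebra.ad_apply k, had, LinearMap.zero_apply, neg_zero]
  rw [S.center_eq_bot, LieSubmodule.mem_bot] at hcenter
  exact h0 hcenter

theorem exists_isRootTriple (hα : IsRoot H α) : ∃ e f h, IsRootTriple H α e f h := by
  obtain ⟨e, he, f, hf, hef⟩ := S.exists_lie_ne_zero hα
  have hmem : ⁅e, f⁆ ∈ H := by
    refine S.mem_of_mem_rootSp_zero ?_
    have := lie_mem_rootSp he hf
    rwa [neg_add_cancel] at this
  lift ⁅e, f⁆ to H using hmem with h hh
  have hαh := S.apply_ne_zero_of_lie_eq hα he hf hh.symm hef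
  refine ⟨e, (2 / α h) • f, (2 / α h) • h, he, Submodule.smul_mem _ _ hf, ?_, ?_, ?_, ?_⟩
  · exact smul_ne_zero (div_ne_zero two_ne_zero hαh) (hh ▸ hef)
  · rw [lie_smul, ← hh]; rfl
  · rw [SetLike.val_smul, smul_lie, he h, smul_smul, div_mul_cancel₀ _ hαh, ofNat_smul_eq_nsmul]
  · rw [SetLike.val_smul, lie_smul, smul_lie, hf h, LinearMap.neg_apply, neg_smul, smul_neg,
      smul_smul (2 / α h) (α h), div_mul_cancel₀ _ hαh, smul_neg, smul_comm, ofNat_smul_eq_nsmul]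

end IsClassicalCartan
end Triples

section Strings

variable {k M : Type} [Field k] [LieRing M] [LieAlgebra k M] {H : LieSubalgebra k M}
variable {α β δ : Module.Dual k H} {x y e f e' f' : M} {h h' : H}
variable {p : ℕ} [CharP k p] [NeZero (2 : k)]

namespace IsClassicalCartan

section Triple

variable (S : IsClassicalCartan p H) (t : IsRootTriple H α e f h)
include S t

omit [CharP k p] in
theorem five_le [Fact p.Prime] : 5 ≤ p := by
  have hlt := S.string_length_lt t.isRoot t.mem_pos t.mem_neg t.mem_neg t.ad_sq_f_ne_zero
    (r := 0) t.f_ne_zero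
  have hp4 : p ≠ 4 := by
    rintro rfl
    exact absurd (Fact.out : Nat.Prime 4) (by norm_num)
  omega

theorem weight_eq (hδ : IsRoot H δ) (hx : x ∈ rootSp k M H δ) (h0 : x ≠ 0) {q r : ℕ}
    (hq : IsDepth (ad k M e) x q) (hr : IsDepth (ad k M f) x r) :
    δ h = r - q ∧ ⁅f, ⁅e, x⁆⁆ = ((q : k) * (r + 1)) • x := by
  obtain ⟨hμ, c, hc, hc'⟩ :=
    S.two_mul_weight_eq t.isRoot t.mem_pos t.mem_neg t.lie_e_f hδ hx h0 hq hr
  rw [t.apply_eq_two] at hμ hc'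
  rw [hc, mul_left_cancel₀ two_ne_zero hc']
  exact ⟨mul_left_cancel₀ two_ne_zero hμ, rfl⟩

omit [CharP k p] in
theorem depth_add_lt (hx : x ∈ rootSp k M H δ) {q r : ℕ} (hq : IsDepth (ad k M e) x q)
    (hr : IsDepth (ad k M f) x r) : r + q + 1 < p :=
  S.string_length_lt t.isRoot t.mem_pos t.mem_neg hx hq.1 hr.1

omit [CharP k p] in
theorem exists_isDepth_pos (h0 : x ≠ 0) : ∃ q, IsDepth (ad k M e) x q :=
  S.exists_isDepth t.isRoot t.mem_pos h0

omit [CharP k p] in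
theorem exists_isDepth_neg (h0 : x ≠ 0) : ∃ r, IsDepth (ad k M f) x r :=
  S.exists_isDepth_pos t.symm h0

theorem lie_lie_ne_zero (hδ : IsRoot H δ) (hx : x ∈ rootSp k M H δ) (hne : ⁅e, x⁆ ≠ 0) :
    ⁅f, ⁅e, x⁆⁆ ≠ 0 := by
  have h0 : x ≠ 0 := by
    rintro rfl
    exact hne (lie_zero e)
  obtain ⟨q, hq⟩ := S.exists_isDepth_pos t h0
  obtain ⟨r, hr⟩ := S.exists_isDepth_neg t h0
  have hlt := S.depth_add_lt t hx hq hr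
  have hq1 : 1 ≤ q := hq.pow_apply_ne_zero_iff.mp (by simpa using hne)
  have hr1 : ((r + 1 : ℕ) : k) ≠ 0 := natCast_ne_zero_of_lt (p := p) (by omega) (by omega)
  rw [(S.weight_eq t hδ hx h0 hq hr).2]
  refine smul_ne_zero (mul_ne_zero (natCast_ne_zero_of_lt (p := p) hq1 (by omega)) ?_) h0
  exact_mod_cast hr1

/-- If `⁅e, y⁆ = 0` although `β + α` is a root, then `y` is the top of one half-string and a root
vector `u` of `β + α` the bottom of another. Comparing weights, the two half-strings have
`p` members together, so they leave no gap in the `p`-periodic string through `β`. -/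
theorem lie_ne_zero_of_isRoot_add (hβ : IsRoot H β) (hαβ : IsRoot H (β + α))
    (hy : y ∈ rootSp k M H β) (h0 : y ≠ 0) : ⁅e, y⁆ ≠ 0 := by
  intro hey
  obtain ⟨u, hu, hu0⟩ := hαβ.exists_ne_zero
  have hfu : ⁅f, u⁆ = 0 := by
    obtain ⟨c, hc⟩ : ∃ c : k, ⁅f, u⁆ = c • y := by
      refine S.exists_eq_smul hβ hy h0 ?_
      have := lie_mem_rootSp t.mem_neg hu
      rwa [add_neg_cancel_right] at this
    by_contra hne
    exact S.lie_lie_ne_zero t.symm hαβ hu hne (by rw [hc, lie_smul, hey, smul_zero])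
  have hqy : IsDepth (ad k M e) y 0 := isDepth_zero_iff.mpr ⟨h0, hey⟩
  have hru : IsDepth (ad k M f) u 0 := isDepth_zero_iff.mpr ⟨hu0, hfu⟩
  obtain ⟨r, hr⟩ := S.exists_isDepth_neg t h0
  obtain ⟨q, hq⟩ := S.exists_isDepth_pos t hu0
  have hlty := S.depth_add_lt t hy hqy hr
  have hltu := S.depth_add_lt t hu hq hru
  have hsum : ((r + q + 2 : ℕ) : k) = 0 := by
    have hwu := (S.weight_eq t hαβ hu hu0 hq hru).1
    rw [LinearMap.add_apply, t.apply_eq_two, (S.weight_eq t hβ hy h0 hqy hr).1] at hwu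
    push_cast at hwu ⊢
    linear_combination hwu
  have hp : r + q + 2 = p := eq_of_natCast_eq_zero (by omega) (by omega) hsum
  have hgap : r + (q + 1) + 1 < p := by
    refine S.string_length_lt_of_ne_bot t.isRoot (δ := β) (fun i hi => ?_) fun i hi => ?_
    · convert rootSp_ne_bot_of_ad_pow_ne_zero t.mem_neg hy hi hr.1 using 2
      rw [smul_neg, sub_eq_add_neg]
    · rcases i with _ | i
      · simpa using hβ.2
      · convert rootSp_ne_bot_of_ad_pow_ne_zero t.mem_pos hu (Nat.le_of_succ_le_succ hi) hq.1
          using 2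
        module
  omega

end Triple

variable (S : IsClassicalCartan p H)
include S

theorem not_isRoot_two_nsmul (hα : IsRoot H α) : ¬ IsRoot H (2 • α) := by
  intro h2α
  obtain ⟨e, f, h, t⟩ := S.exists_isRootTriple hα
  exact S.lie_ne_zero_of_isRoot_add t hα (two_nsmul α ▸ h2α) t.mem_pos t.e_ne_zero (lie_self e)

/-- A root vector of `3 • α` would generate a half-string reaching exactly to `(p - 3) • α`, which
contains `((p + 1) / 2) • α`, a root whose double is `α`. -/
theorem not_isRoot_three_nsmul [Fact p.Prime] (hα : IsRoot H α) : ¬ IsRoot H (3 • α) := by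
  intro h3α
  obtain ⟨e, f, h, t⟩ := S.exists_isRootTriple hα
  obtain ⟨x, hx, h0⟩ := h3α.exists_ne_zero
  have hp5 := S.five_le t
  have nsmul_ne_zero {n : ℕ} (hn : 0 < n) (hnp : n < p) : n • α ≠ 0 := by
    rw [← Nat.cast_smul_eq_nsmul k]
    exact smul_ne_zero (natCast_ne_zero_of_lt hn hnp) hα.1
  have hfx : ⁅f, x⁆ = 0 := by
    have hmem := lie_mem_rootSp t.mem_neg hx
    rw [show 3 • α + -α = 2 • α by module] at hmem
    by_contra hne
    exact S.not_isRoot_two_nsmul hα (.of_mem (nsmul_ne_zero two_pos (by omega)) hmem hne)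
  have hr : IsDepth (ad k M f) x 0 := isDepth_zero_iff.mpr ⟨h0, hfx⟩
  obtain ⟨q, hq⟩ := S.exists_isDepth_pos t h0
  have hqp : q + 6 = p := by
    have hlt := S.depth_add_lt t hx hq hr
    have hweight := (S.weight_eq t h3α hx h0 hq hr).1
    refine eq_of_natCast_eq_zero (k := k) (by omega) (by omega) ?_
    rw [LinearMap.smul_apply, t.apply_eq_two, nsmul_eq_mul] at hweight
    push_cast at hweight ⊢
    linear_combination hweight
  obtain ⟨m, hm⟩ := (Fact.out : p.Prime).odd_of_ne_two (by omega)
  have hhalf : IsRoot H ((m + 1) • α) := by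
    refine ⟨nsmul_ne_zero m.succ_pos (by omega), ?_⟩
    convert rootSp_ne_bot_of_ad_pow_ne_zero t.mem_pos hx (i := m - 2) (by omega) hq.1 using 2
    rw [← add_smul, show 3 + (m - 2) = m + 1 by omega]
  refine S.not_isRoot_two_nsmul hhalf ?_
  rwa [smul_smul, show 2 * (m + 1) = p + 1 by omega, ← Nat.cast_smul_eq_nsmul k, Nat.cast_succ,
    CharP.cast_eq_zero, zero_add, one_smul]

omit [CharP k p] [NeZero (2 : k)] in
theorem lie_lie_eq_zero_of_mem_rootSp_zero (he : e ∈ rootSp k M H α) (hx : x ∈ rootSp k M H 0) :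
    ⁅e, ⁅e, x⁆⁆ = 0 := by
  have hxe : ⁅x, e⁆ = α ⟨x, S.mem_of_mem_rootSp_zero hx⟩ • e := he ⟨x, _⟩
  rw [← lie_skew e x, lie_neg, hxe, lie_smul, lie_self, smul_zero, neg_zero]

omit [CharP k p] [NeZero (2 : k)] in
theorem isRoot_of_ad_sq_ne_zero (he : e ∈ rootSp k M H α) (hx : x ∈ rootSp k M H δ)
    (hne : ⁅e, ⁅e, x⁆⁆ ≠ 0) : IsRoot H δ := by
  refine .of_mem ?_ hx ?_
  · rintro rfl
    exact hne (S.lie_lie_eq_zero_of_mem_rootSp_zero he hx)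
  · rintro rfl
    exact hne (by rw [lie_zero, lie_zero])

section Triple

variable (t : IsRootTriple H α e f h)
include t

omit [CharP k p] in
theorem isRoot_add_depth (hδ : IsRoot H δ) (hx : x ∈ rootSp k M H δ) {q : ℕ}
    (hq : IsDepth (ad k M e) x q) : IsRoot H (δ + q • α) := by
  refine ⟨fun htop => ?_, rootSp_ne_bot_of_ad_pow_ne_zero t.mem_pos hx le_rfl hq.1⟩
  rcases q with _ | q
  · exact hδ.1 (by simpa using htop)
  have hmem := ad_pow_mem_rootSp t.mem_pos hx q
  rw [show δ + q • α = -α by rw [eq_neg_iff_add_eq_zero, ← htop]; module] at hmem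
  obtain ⟨c, hc⟩ := S.exists_eq_smul (S.isRoot_neg t.isRoot) t.mem_neg t.f_ne_zero hmem
  have hc0 : c ≠ 0 := by
    rintro rfl
    exact hq.pow_apply_ne_zero_iff.mpr q.le_succ (by rw [hc, zero_smul])
  have hzero := hq.2
  rw [add_assoc, add_comm, pow_add, Module.End.mul_apply, hc, map_smul] at hzero
  exact smul_ne_zero hc0 t.ad_sq_f_ne_zero hzero

theorem apply_add_depth (hδ : IsRoot H δ) (hx : x ∈ rootSp k M H δ) (h0 : x ≠ 0) {q r : ℕ}
    (hq : IsDepth (ad k M e) x q) (hr : IsDepth (ad k M f) x r) :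
    (δ + q • α) h = ((r + q : ℕ) : k) := by
  rw [LinearMap.add_apply, LinearMap.smul_apply, t.apply_eq_two,
    (S.weight_eq t hδ hx h0 hq hr).1, nsmul_eq_mul]
  push_cast
  ring

theorem isDepth_neg_top (hδ : IsRoot H δ) (hx : x ∈ rootSp k M H δ) (h0 : x ≠ 0) {q r : ℕ}
    (hq : IsDepth (ad k M e) x q) (hr : IsDepth (ad k M f) x r) :
    IsDepth (ad k M f) ((ad k M e ^ q) x) (r + q) := by
  have hroot := S.isRoot_add_depth t hδ hx hq
  have hmem := ad_pow_mem_rootSp t.mem_pos hx q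
  have hq' := hq.isDepth_zero_pow_apply
  obtain ⟨r', hr'⟩ := S.exists_isDepth_neg t hq.1
  have hlt := S.depth_add_lt t hx hq hr
  have hlt' := S.depth_add_lt t hmem hq' hr'
  have hweight := (S.weight_eq t hroot hmem hq.1 hq' hr').1
  rw [S.apply_add_depth t hδ hx h0 hq hr, Nat.cast_zero, sub_zero] at hweight
  rwa [(CharP.natCast_injOn_Iio k p) (Set.mem_Iio.mpr (by omega)) (Set.mem_Iio.mpr (by omega))
    hweight]

theorem ad_neg_pow_eq_zero {N : ℕ} (hN : ad k M e ^ (N + 1) = 0) : ad k M f ^ (N + 1) = 0 := by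
  have hN2 : 2 ≤ N := by
    by_contra! hlt
    exact t.ad_sq_f_ne_zero (Module.End.pow_map_zero_of_le hlt (LinearMap.congr_fun hN f))
  refine S.end_eq_zero fun δ x hx => ?_
  by_contra hne
  have hδ : IsRoot H δ := by
    refine S.isRoot_of_ad_sq_ne_zero t.mem_neg hx fun hsq => ?_
    exact hne (Module.End.pow_map_zero_of_le (show 2 ≤ N + 1 by omega) (by rwa [pow_two]))
  have h0 : x ≠ 0 := by
    rintro rfl
    exact hne (map_zero _)
  obtain ⟨q, hq⟩ := S.exists_isDepth_pos t h0
  obtain ⟨r, hr⟩ := S.exists_isDepth_neg t h0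
  have hle := hr.pow_apply_ne_zero_iff.mp hne
  exact (S.isDepth_neg_top t.symm hδ hx h0 hr hq).pow_apply_ne_zero_iff.mpr
    (show N + 1 ≤ q + r by omega) (LinearMap.congr_fun hN _)

theorem depth_add_le {N : ℕ} (hN : ad k M e ^ (N + 1) = 0) (hδ : IsRoot H δ)
    (hx : x ∈ rootSp k M H δ) (h0 : x ≠ 0) {q r : ℕ} (hq : IsDepth (ad k M e) x q)
    (hr : IsDepth (ad k M f) x r) : r + q ≤ N :=
  Nat.lt_succ_iff.mp <| (S.isDepth_neg_top t hδ hx h0 hq hr).pow_apply_eq_zero_iff.mp <|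
    LinearMap.congr_fun (S.ad_neg_pow_eq_zero t hN) _

theorem lie_neg_eq_zero (t' : IsRootTriple H β e' f' h') (hcomm : ⁅e, e'⁆ = 0) : ⁅f, f'⁆ = 0 := by
  by_contra hne
  have hmem := lie_mem_rootSp t.mem_neg t'.mem_neg
  by_cases hαβ : β + α = 0
  · obtain rfl : β = -α := eq_neg_of_add_eq_zero_left hαβ
    obtain ⟨c, hc⟩ :=
      S.exists_eq_smul (S.isRoot_neg t.isRoot) t.mem_neg t.f_ne_zero t'.mem_pos
    rw [hc, lie_smul, t.lie_e_f] at hcomm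
    rcases smul_eq_zero.mp hcomm with rfl | hh
    · exact t'.e_ne_zero (by rw [hc, zero_smul])
    · exact t.isSl2Triple.h_ne_zero hh
  · have hroot : IsRoot H (β + α) := by
      rw [← neg_add] at hmem
      have := S.isRoot_neg (.of_mem (neg_ne_zero.mpr hαβ) hmem hne)
      rwa [neg_neg] at this
    exact S.lie_ne_zero_of_isRoot_add t t'.isRoot hroot t'.mem_pos t'.e_ne_zero hcomm

end Triple
end IsClassicalCartan
end Strings

section Chains

variable {k M : Type} [Field k] [LieRing M] [LieAlgebra k M] {H : LieSubalgebra k M}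
variable {α β δ : Module.Dual k H} {x e f e' f' : M} {h h' : H} {W W' : ℤ}

theorem ad_pow_lie_of_lie_eq_zero (hcomm : ⁅e, e'⁆ = 0) (i : ℕ) (x : M) :
    (ad k M e ^ i) ⁅e', x⁆ = ⁅e', (ad k M e ^ i) x⁆ := by
  have hcommute : Commute (ad k M e) (ad k M e') := by
    refine LinearMap.ext fun y => ?_
    simp only [Module.End.mul_apply, LieAlgebra.ad_apply]
    rw [leibniz_lie, hcomm, zero_lie, zero_add]
  exact LinearMap.congr_fun (hcommute.pow_left i) x

/-- The weight of `x` under the `sl₂`-triple with raising element `e` and lowering element `f`,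
read off from the two half-strings through `x` as an integer, whereas the eigenvalue of `⁅e, f⁆`
determines it only modulo `p`. -/
def IsStringWeight (k : Type) {M : Type} [Field k] [LieRing M] [LieAlgebra k M] (e f x : M)
    (W : ℤ) : Prop :=
  ∃ q r : ℕ, IsDepth (ad k M e) x q ∧ IsDepth (ad k M f) x r ∧ W = r - q

namespace IsClassicalCartan

variable {p : ℕ} [CharP k p] [NeZero (2 : k)] (S : IsClassicalCartan p H)
  (t : IsRootTriple H α e f h)
include S t

omit [CharP k p] in
theorem exists_isStringWeight (h0 : x ≠ 0) : ∃ W, IsStringWeight k e f x W := by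
  obtain ⟨q, hq⟩ := S.exists_isDepth_pos t h0
  obtain ⟨r, hr⟩ := S.exists_isDepth_neg t h0
  exact ⟨r - q, q, r, hq, hr, rfl⟩

theorem apply_eq_of_isStringWeight (hδ : IsRoot H δ) (hx : x ∈ rootSp k M H δ) (h0 : x ≠ 0)
    (hW : IsStringWeight k e f x W) : δ h = W := by
  obtain ⟨q, r, hq, hr, rfl⟩ := hW
  rw [(S.weight_eq t hδ hx h0 hq hr).1]
  push_cast
  rfl

section Commuting

variable {N w : ℕ} (hN : ad k M e ^ (N + 1) = 0)
include hN

theorem abs_isStringWeight_le (hδ : IsRoot H δ) (hx : x ∈ rootSp k M H δ) (h0 : x ≠ 0)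
    (hW : IsStringWeight k e f x W) : |W| ≤ N := by
  obtain ⟨q, r, hq, hr, rfl⟩ := hW
  have := S.depth_add_le t hN hδ hx h0 hq hr
  rw [abs_le]
  constructor <;> omega

omit hN in
theorem isStringWeight_le_lie (t' : IsRootTriple H β e' f' h') (hcomm : ⁅e, e'⁆ = 0)
    (hδ : IsRoot H δ) (hx : x ∈ rootSp k M H δ) (hne : ⁅e', x⁆ ≠ 0)
    (hW : IsStringWeight k e f x W) (hW' : IsStringWeight k e f ⁅e', x⁆ W') : W ≤ W' := by
  obtain ⟨q, r, hq, hr, rfl⟩ := hW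
  obtain ⟨q', r', hq', hr', rfl⟩ := hW'
  have h0 : x ≠ 0 := by
    rintro rfl
    exact hne (lie_zero e')
  have hqq : q' ≤ q := by
    refine Nat.lt_succ_iff.mp (hq'.pow_apply_eq_zero_iff.mp ?_)
    rw [ad_pow_lie_of_lie_eq_zero hcomm, hq.2, lie_zero]
  have hrr : r ≤ r' := by
    refine hr'.pow_apply_ne_zero_iff.mp fun hzero => ?_
    obtain ⟨c, hc⟩ : ∃ c : k, ⁅f', ⁅e', x⁆⁆ = c • x := by
      refine S.exists_eq_smul hδ hx h0 ?_
      have := lie_mem_rootSp t'.mem_neg (lie_mem_rootSp t'.mem_pos hx)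
      rwa [add_neg_cancel_right] at this
    have hc0 : c ≠ 0 := by
      rintro rfl
      exact S.lie_lie_ne_zero t' hδ hx hne (by rw [hc, zero_smul])
    have hpull := ad_pow_lie_of_lie_eq_zero (k := k) (S.lie_neg_eq_zero t t' hcomm) r ⁅e', x⁆
    rw [hzero, lie_zero, hc, map_smul] at hpull
    exact smul_ne_zero hc0 hr.1 hpull
  omega

variable (t' : IsRootTriple H β e' f' h') (hcomm : ⁅e, e'⁆ = 0) (hw : β h = (w : k))
  (hwp : w < p) (hNp : 2 * N < w + p)
include t' hcomm hw hwp hNp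

theorem isStringWeight_lie_eq_add (hδ : IsRoot H δ) (hδβ : IsRoot H (δ + β))
    (hx : x ∈ rootSp k M H δ) (hne : ⁅e', x⁆ ≠ 0) (hW : IsStringWeight k e f x W)
    (hW' : IsStringWeight k e f ⁅e', x⁆ W') : W' = W + w := by
  have h0 : x ≠ 0 := by
    rintro rfl
    exact hne (lie_zero e')
  have hmem := lie_mem_rootSp t'.mem_pos hx
  have hle := S.isStringWeight_le_lie t t' hcomm hδ hx hne hW hW'
  have hbound := abs_le.mp (S.abs_isStringWeight_le t hN hδ hx h0 hW)
  have hbound' := abs_le.mp (S.abs_isStringWeight_le t hN hδβ hmem hne hW')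
  have hweight := S.apply_eq_of_isStringWeight t hδβ hmem hne hW'
  rw [LinearMap.add_apply, S.apply_eq_of_isStringWeight t hδ hx h0 hW, hw] at hweight
  refine intCast_inj_of_abs_lt (k := k) (p := p) ?_ (by push_cast; exact hweight.symm)
  rw [abs_lt]
  constructor <;> omega

end Commuting

omit [CharP k p] in
theorem exists_isDepth_max :
    ∃ N, 2 ≤ N ∧ ad k M e ^ (N + 1) = 0 ∧
      ∃ δ, IsRoot H δ ∧ ∃ x ∈ rootSp k M H δ, IsDepth (ad k M e) x N := by
  classical
  have hex : ∃ n, ad k M e ^ n = 0 := ⟨p - 1, S.ad_pow_eq_zero t.isRoot t.mem_pos⟩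
  have hthree : 3 ≤ Nat.find hex := by
    by_contra! hlt
    refine t.ad_sq_f_ne_zero (Module.End.pow_map_zero_of_le (Nat.le_of_lt_succ hlt) ?_)
    rw [Nat.find_spec hex, LinearMap.zero_apply]
  obtain ⟨N, hN⟩ : ∃ N, Nat.find hex = N + 1 := ⟨Nat.find hex - 1, by omega⟩
  have hzero : ad k M e ^ (N + 1) = 0 := hN ▸ Nat.find_spec hex
  have hne : ad k M e ^ N ≠ 0 := Nat.find_min hex (by omega)
  obtain ⟨δ, x, hx, hxN⟩ : ∃ δ, ∃ x ∈ rootSp k M H δ, (ad k M e ^ N) x ≠ 0 := by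
    by_contra! hall
    exact hne (S.end_eq_zero hall)
  refine ⟨N, by omega, hzero, δ, S.isRoot_of_ad_sq_ne_zero t.mem_pos hx fun hsq => ?_, x, hx,
    hxN, by rw [hzero, LinearMap.zero_apply]⟩
  exact hxN (Module.End.pow_map_zero_of_le (show 2 ≤ N by omega) (by rwa [pow_two]))

omit t

theorem isRoot_and_isRoot_of_ad_sq_ne_zero (hα : IsRoot H α) (he : e ∈ rootSp k M H α)
    (hx : x ∈ rootSp k M H δ) (hne : ⁅e, ⁅e, x⁆⁆ ≠ 0) : IsRoot H δ ∧ IsRoot H (δ + α + α) := by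
  have hδ := S.isRoot_of_ad_sq_ne_zero he hx hne
  refine ⟨hδ, .of_mem (fun hzero => ?_) (lie_mem_rootSp he (lie_mem_rootSp he hx)) hne⟩
  refine S.not_isRoot_two_nsmul (S.isRoot_neg hα) ?_
  rw [add_assoc, add_eq_zero_iff_eq_neg] at hzero
  convert hδ using 1
  rw [hzero]
  module

theorem isRoot_string_of_ad_pow_three_ne_zero (hα : IsRoot H α) (he : e ∈ rootSp k M H α)
    (hx : x ∈ rootSp k M H δ) (hne : ⁅e, ⁅e, ⁅e, x⁆⁆⁆ ≠ 0) :
    IsRoot H δ ∧ IsRoot H (δ + α) ∧ IsRoot H (δ + α + α) ∧ IsRoot H (δ + α + α + α) := by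
  have hδ := S.isRoot_and_isRoot_of_ad_sq_ne_zero hα he hx
    fun hzero => hne (by rw [hzero, lie_zero])
  have hδα := S.isRoot_and_isRoot_of_ad_sq_ne_zero hα he (lie_mem_rootSp he hx) hne
  exact ⟨hδ.1, hδα.1, hδ.2, hδα.2⟩

section Commuting

variable {N w : ℕ} (t : IsRootTriple H α e f h) (hN : ad k M e ^ (N + 1) = 0)
  (t' : IsRootTriple H β e' f' h') (hcomm : ⁅e, e'⁆ = 0) (hw : β h = (w : k))
  (hwp : w < p) (hNp : 2 * N < w + p)
include t hN t' hcomm hw hwp hNp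

theorem exists_weight_of_ad_pow_three_ne_zero (hx : x ∈ rootSp k M H δ)
    (hne : ⁅e', ⁅e', ⁅e', x⁆⁆⁆ ≠ 0) : ∃ W : ℤ, δ h = W ∧ -N ≤ W ∧ W + 3 * w ≤ N := by
  obtain ⟨r₀, r₁, r₂, r₃⟩ := S.isRoot_string_of_ad_pow_three_ne_zero t'.isRoot t'.mem_pos hx hne
  have m₁ := lie_mem_rootSp t'.mem_pos hx
  have m₂ := lie_mem_rootSp t'.mem_pos m₁
  have m₃ := lie_mem_rootSp t'.mem_pos m₂
  have n₂ : ⁅e', ⁅e', x⁆⁆ ≠ 0 := fun hzero => hne (by rw [hzero, lie_zero])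
  have n₁ : ⁅e', x⁆ ≠ 0 := fun hzero => n₂ (by rw [hzero, lie_zero])
  have n₀ : x ≠ 0 := fun hzero => n₁ (by rw [hzero, lie_zero])
  obtain ⟨W₀, hW₀⟩ := S.exists_isStringWeight t n₀
  obtain ⟨W₁, hW₁⟩ := S.exists_isStringWeight t n₁
  obtain ⟨W₂, hW₂⟩ := S.exists_isStringWeight t n₂
  obtain ⟨W₃, hW₃⟩ := S.exists_isStringWeight t hne
  have s₁ := S.isStringWeight_lie_eq_add t hN t' hcomm hw hwp hNp r₀ r₁ hx n₁ hW₀ hW₁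
  have s₂ := S.isStringWeight_lie_eq_add t hN t' hcomm hw hwp hNp r₁ r₂ m₁ n₂ hW₁ hW₂
  have s₃ := S.isStringWeight_lie_eq_add t hN t' hcomm hw hwp hNp r₂ r₃ m₂ hne hW₂ hW₃
  have hlow := (abs_le.mp (S.abs_isStringWeight_le t hN r₀ hx n₀ hW₀)).1
  have hhigh := (abs_le.mp (S.abs_isStringWeight_le t hN r₃ m₃ hne hW₃)).2
  exact ⟨W₀, S.apply_eq_of_isStringWeight t r₀ hx n₀ hW₀, hlow, by omega⟩

theorem ad_pow_three_eq_zero_of_lie_eq_zero (hNw : 2 * N < 3 * w) : ad k M e' ^ 3 = 0 := by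
  refine S.end_eq_zero fun δ x hx => ?_
  by_contra hne
  obtain ⟨W, -, hlow, hhigh⟩ :=
    S.exists_weight_of_ad_pow_three_ne_zero t hN t' hcomm hw hwp hNp hx
      (by simpa only [pow_succ, pow_zero, one_mul, Module.End.mul_apply, LieAlgebra.ad_apply]
        using hne)
  omega

end Commuting

/-- The root is that of the top of a longest string in the direction of a root vector of `α`. -/
theorem exists_isRootTriple_ad_pow_three_eq_zero (hα : IsRoot H α) :
    ∃ β e f h, IsRootTriple H β e f h ∧ ad k M e ^ 3 = 0 := by
  obtain ⟨e, f, h, t⟩ := S.exists_isRootTriple hα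
  obtain ⟨N, hN2, hN, δ, hδ, x, hx, hxN⟩ := S.exists_isDepth_max t
  have h0 : x ≠ 0 := by
    rintro rfl
    exact hxN.1 (map_zero _)
  obtain ⟨r, hr⟩ := S.exists_isDepth_neg t h0
  obtain rfl : r = 0 := by
    have := S.depth_add_le t hN hδ hx h0 hxN hr
    omega
  have hlt := S.depth_add_lt t hx hxN hr
  have hweight := S.apply_add_depth t hδ hx h0 hxN hr
  rw [zero_add] at hweight
  have hroot := S.isRoot_add_depth t hδ hx hxN
  obtain ⟨e', f', h', t'⟩ := S.exists_isRootTriple hroot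
  have hcomm : ⁅e, e'⁆ = 0 := by
    obtain ⟨c, hc⟩ :=
      S.exists_eq_smul hroot (ad_pow_mem_rootSp t.mem_pos hx N) hxN.1 t'.mem_pos
    have hkill : ⁅e, (ad k M e ^ N) x⁆ = 0 := (isDepth_zero_iff.mp hxN.isDepth_zero_pow_apply).2
    rw [hc, lie_smul, hkill, smul_zero]
  exact ⟨_, e', f', h', t', S.ad_pow_three_eq_zero_of_lie_eq_zero t hN t' hcomm hweight (by omega)
    (by omega) (by omega)⟩

end IsClassicalCartan
end Chains

section SlTwoSpan

variable {k M : Type*} [Field k] [LieRing M] [LieAlgebra k M] {e f h z x y : M}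

theorem sl2Triple_mem_toLieSubalgebra (t : IsSl2Triple h e f) :
    e ∈ t.toLieSubalgebra k ∧ f ∈ t.toLieSubalgebra k :=
  ⟨IsSl2Triple.mem_toLieSubalgebra_iff.mpr ⟨1, 0, 0, by module⟩,
    IsSl2Triple.mem_toLieSubalgebra_iff.mpr ⟨0, 1, 0, by module⟩⟩

theorem mem_normalizer_toLieSubalgebra {t : IsSl2Triple h e f}
    (he : ⁅z, e⁆ ∈ t.toLieSubalgebra k) (hf : ⁅z, f⁆ ∈ t.toLieSubalgebra k) :
    z ∈ (t.toLieSubalgebra k).normalizer := by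
  obtain ⟨heK, hfK⟩ := sl2Triple_mem_toLieSubalgebra (k := k) t
  rw [LieSubalgebra.mem_normalizer_iff]
  intro y hy
  obtain ⟨a, b, c, rfl⟩ := IsSl2Triple.mem_toLieSubalgebra_iff.mp hy
  rw [lie_add, lie_add, lie_smul, lie_smul, lie_smul, leibniz_lie z e f]
  exact add_mem (add_mem (Submodule.smul_mem _ _ he) (Submodule.smul_mem _ _ hf))
    (Submodule.smul_mem _ _ (add_mem (LieSubalgebra.lie_mem _ he hfK)
      (LieSubalgebra.lie_mem _ heK hf)))

theorem eq_top_of_forall_mem_normalizer [LieAlgebra.IsSimple k M] {K : LieSubalgebra k M}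
    (hz : z ∈ K) (h0 : z ≠ 0) (hK : ∀ m, m ∈ K.normalizer) : K = ⊤ := by
  obtain ⟨I, rfl⟩ := (LieSubalgebra.exists_lieIdeal_coe_eq_iff (R := k) K).mpr fun m y hy =>
    (LieSubalgebra.mem_normalizer_iff _ m).mp (hK m) y hy
  rcases LieAlgebra.IsSimple.eq_bot_or_eq_top I with rfl | rfl
  · exact absurd (by simpa using hz) h0
  · rfl

variable [NeZero (2 : k)]

theorem sl2Triple_linearIndependent (t : IsSl2Triple h e f) :
    LinearIndependent k ![e, f, h] := by
  have h2 : (2 : k) ≠ 0 := two_ne_zero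
  have h4 : (2 : k) ≠ -2 := by
    rw [Ne, eq_neg_iff_add_eq_zero, show (2 : k) + 2 = 2 * 2 by norm_num]
    exact mul_ne_zero h2 h2
  refine Module.End.eigenvectors_linearIndependent' (ad k M h) ![2, -2, 0] ?_ _ fun i => ?_
  · simp [Function.Injective, Fin.forall_fin_succ, h2, h2.symm, h4, h4.symm]
  · rw [Module.End.hasEigenvector_iff, Module.End.mem_eigenspace_iff]
    fin_cases i
    · exact ⟨t.lie_h_e_smul k, t.e_ne_zero⟩
    · exact ⟨(t.lie_lie_smul_f k).trans (neg_smul _ _).symm, t.f_ne_zero⟩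
    · exact ⟨(lie_self h).trans (zero_smul k h).symm, t.h_ne_zero⟩

/-- In the basis `e, f, h` the bracket of `sl₂` is the cross product up to nonzero factors. -/
theorem sl2Triple_not_linearIndependent_of_lie_eq_zero {t : IsSl2Triple h e f}
    (hx : x ∈ t.toLieSubalgebra k) (hy : y ∈ t.toLieSubalgebra k) (hxy : ⁅x, y⁆ = 0) :
    ¬ LinearIndependent k ![x, y] := by
  have h2 : (2 : k) ≠ 0 := two_ne_zero
  obtain ⟨a, b, c, rfl⟩ := IsSl2Triple.mem_toLieSubalgebra_iff.mp hx
  obtain ⟨a', b', c', rfl⟩ := IsSl2Triple.mem_toLieSubalgebra_iff.mp hy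
  rw [t.lie_e_f] at hxy ⊢
  have hfe : ⁅f, e⁆ = -h := by rw [← lie_skew, t.lie_e_f]
  have heh : ⁅e, h⁆ = -((2 : k) • e) := by rw [← lie_skew, t.lie_h_e_smul k]
  have hfh : ⁅f, h⁆ = (2 : k) • f := by rw [← lie_skew, t.lie_lie_smul_f k, neg_neg]
  simp only [lie_add, add_lie, lie_smul, smul_lie, lie_self, t.lie_e_f, hfe, heh, hfh,
    t.lie_h_e_smul k, t.lie_lie_smul_f k] at hxy
  have hcoord := Fintype.linearIndependent_iff.mp (sl2Triple_linearIndependent (k := k) t)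
    ![2 * (c * a' - a * c'), 2 * (b * c' - c * b'), a * b' - b * a']
    (by simp only [Fin.sum_univ_three]; rw [← hxy]; dsimp; module)
  have hcross : crossProduct ![a, b, c] ![a', b', c'] = 0 := by
    rw [cross_apply]
    ext i
    fin_cases i
    · exact (mul_eq_zero.mp (hcoord 1)).resolve_left h2
    · exact (mul_eq_zero.mp (hcoord 0)).resolve_left h2
    · exact hcoord 2
  intro hli
  refine crossProduct_ne_zero_iff_linearIndependent.mpr ?_ hcross
  refine LinearIndependent.of_comp (Fintype.linearCombination k ![e, f, h]) ?_
  convert hli using 1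
  ext i
  fin_cases i <;> simp [Fintype.linearCombination_apply, Fin.sum_univ_three]

end SlTwoSpan

section CubeZero

/-- Commuting independent elements of ad-nilpotency degree at most `3`. -/
structure IsCubeZeroPair (k : Type*) {M : Type*} [Field k] [LieRing M] [LieAlgebra k M]
    (c c' : M) : Prop where
  linearIndependent : LinearIndependent k ![c, c']
  lie_eq_zero : ⁅c, c'⁆ = 0
  left_cube : ad k M c ^ 3 = 0
  right_cube : ad k M c' ^ 3 = 0

variable {k M : Type} [Field k] [LieRing M] [LieAlgebra k M] {H : LieSubalgebra k M}
variable {α β δ : Module.Dual k H} {x y e f e' f' : M} {h h' : H}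

theorem linearIndependent_of_mem_rootSp (hx : x ∈ rootSp k M H α) (hx0 : x ≠ 0)
    (hy : y ∈ rootSp k M H β) (hy0 : y ≠ 0) (hne : α ≠ β) : LinearIndependent k ![x, y] := by
  rw [LinearIndependent.pair_iff' hx0]
  rintro a rfl
  refine hne (LinearMap.ext fun h => ?_)
  have hweight := hy h
  rw [lie_smul, hx h, smul_comm] at hweight
  exact smul_left_injective k hy0 hweight

namespace IsClassicalCartan

variable {p : ℕ} [Fact p.Prime] [CharP k p] [NeZero (2 : k)] (S : IsClassicalCartan p H)
include S

section LongRoot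

variable (t : IsRootTriple H α e f h) (he : ad k M e ^ 3 = 0)
include t he

theorem lie_eq_zero_of_apply_eq (hδ : IsRoot H δ) (hx : x ∈ rootSp k M H δ) {w : ℕ} (hw1 : 1 ≤ w)
    (hw2 : w ≤ 2) (hw : δ h = (w : k)) : ⁅e, x⁆ = 0 := by
  by_cases h0 : x = 0
  · rw [h0, lie_zero]
  obtain ⟨q, hq⟩ := S.exists_isDepth_pos t h0
  obtain ⟨r, hr⟩ := S.exists_isDepth_neg t h0
  have hle := S.depth_add_le t he hδ hx h0 hq hr
  have hp5 := S.five_le t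
  have hweight : (r - q : ℤ) = w := by
    refine intCast_inj_of_abs_lt (k := k) (p := p) (by rw [abs_lt]; constructor <;> omega) ?_
    push_cast
    rw [← (S.weight_eq t hδ hx h0 hq hr).1, hw]
  obtain rfl : q = 0 := by omega
  exact (isDepth_zero_iff.mp hq).2

theorem isCubeZeroPair_of_apply_eq_two (t' : IsRootTriple H β e' f' h') (hβα : β ≠ α)
    (hβ : β h = 2) : IsCubeZeroPair k e e' := by
  have hp5 := S.five_le t
  have hβ' : β h = (2 : ℕ) := by exact_mod_cast hβ
  have hcomm := S.lie_eq_zero_of_apply_eq t he t'.isRoot t'.mem_pos one_le_two le_rfl hβ'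
  exact ⟨linearIndependent_of_mem_rootSp t.mem_pos t.e_ne_zero t'.mem_pos t'.e_ne_zero hβα.symm,
    hcomm, he, S.ad_pow_three_eq_zero_of_lie_eq_zero t he t' hcomm hβ' (by omega) (by omega)
      (by norm_num)⟩

section UniqueWeightTwo

variable (hα : ∀ ε, IsRoot H ε → ε h = 2 → ε = α)
include hα

theorem isRoot_of_ad_pow_three_ne_zero (t' : IsRootTriple H β e' f' h') (hβ : β h = 1)
    (hne : ad k M e' ^ 3 ≠ 0) : IsRoot H (2 • β - α) ∧ IsRoot H (3 • β - α) := by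
  have hp5 := S.five_le t
  have hβ' : β h = (1 : ℕ) := by exact_mod_cast hβ
  have hcomm := S.lie_eq_zero_of_apply_eq t he t'.isRoot t'.mem_pos le_rfl one_le_two hβ'
  obtain ⟨δ, x, hx, hx3⟩ : ∃ δ, ∃ x ∈ rootSp k M H δ, (ad k M e' ^ 3) x ≠ 0 := by
    by_contra! hall
    exact hne (S.end_eq_zero hall)
  simp only [pow_succ, pow_zero, one_mul, Module.End.mul_apply, LieAlgebra.ad_apply] at hx3
  obtain ⟨r₀, r₁, r₂, r₃⟩ := S.isRoot_string_of_ad_pow_three_ne_zero t'.isRoot t'.mem_pos hx hx3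
  obtain ⟨W, hW, hlow, hhigh⟩ := S.exists_weight_of_ad_pow_three_ne_zero t he t' hcomm hβ'
    (by omega) (by omega) hx hx3
  obtain rfl | rfl : W = -2 ∨ W = -1 := by omega
  · have hδ : -δ = α := hα _ (S.isRoot_neg r₀) (by rw [LinearMap.neg_apply, hW]; simp)
    constructor
    · convert r₂ using 1
      rw [← hδ]
      module
    · convert r₃ using 1
      rw [← hδ]
      module
  · have hδ : δ + β + β + β = α := by
      refine hα _ r₃ ?_
      simp only [LinearMap.add_apply, hW, hβ]
      push_cast
      ring
    constructor
    · convert S.isRoot_neg r₁ using 1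
      rw [← hδ]
      module
    · convert S.isRoot_neg r₀ using 1
      rw [← hδ]
      module

/-- If the cube is not zero for `β`, then it is zero for `3 • β - α`: otherwise `2 • β - α` and
its triple `2 • (3 • β - α) - α` would both be roots. -/
theorem exists_isCubeZeroPair_of_apply_eq_one (hβ : IsRoot H β) (hβh : β h = 1) :
    ∃ e', IsCubeZeroPair k e e' := by
  have isCubeZeroPair {β e' f' h'} (t' : IsRootTriple H β e' f' h') (hβh : β h = 1)
      (he' : ad k M e' ^ 3 = 0) : IsCubeZeroPair k e e' := by
    have hβα : α ≠ β := by
      rintro rfl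
      rw [t.apply_eq_two] at hβh
      exact one_ne_zero (α := k) (by linear_combination hβh)
    exact ⟨linearIndependent_of_mem_rootSp t.mem_pos t.e_ne_zero t'.mem_pos t'.e_ne_zero hβα,
      S.lie_eq_zero_of_apply_eq t he t'.isRoot t'.mem_pos le_rfl one_le_two
        (by exact_mod_cast hβh), he, he'⟩
  obtain ⟨e', f', h', t'⟩ := S.exists_isRootTriple hβ
  by_cases he' : ad k M e' ^ 3 = 0
  · exact ⟨e', isCubeZeroPair t' hβh he'⟩
  obtain ⟨r₂, r₃⟩ := S.isRoot_of_ad_pow_three_ne_zero t he hα t' hβh he'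
  obtain ⟨e'', f'', h'', t''⟩ := S.exists_isRootTriple r₃
  have hβh' : (3 • β - α) h = 1 := by
    rw [LinearMap.sub_apply, LinearMap.smul_apply, hβh, t.apply_eq_two]
    norm_num
  refine ⟨e'', isCubeZeroPair t'' hβh' ?_⟩
  by_contra he''
  refine S.not_isRoot_three_nsmul r₂ ?_
  convert (S.isRoot_of_ad_pow_three_ne_zero t he hα t'' hβh' he'').1 using 1
  module

omit [Fact p.Prime] in
theorem lie_eq_zero_of_forall_apply_ne_one (hone : ∀ ε, IsRoot H ε → ε h ≠ 1) (hδ : IsRoot H δ)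
    (hδα : δ ≠ α) (hδα' : δ ≠ -α) (hx : x ∈ rootSp k M H δ) : ⁅e, x⁆ = 0 ∧ ⁅f, x⁆ = 0 := by
  by_cases h0 : x = 0
  · simp [h0]
  obtain ⟨q, hq⟩ := S.exists_isDepth_pos t h0
  obtain ⟨r, hr⟩ := S.exists_isDepth_neg t h0
  have hle := S.depth_add_le t he hδ hx h0 hq hr
  have hweight := (S.weight_eq t hδ hx h0 hq hr).1
  have hweight' : (-δ) h = q - r := by rw [LinearMap.neg_apply, hweight, neg_sub]
  obtain ⟨rfl, rfl⟩ | ⟨rfl, rfl⟩ | ⟨rfl, rfl⟩ | ⟨rfl, rfl⟩ | ⟨rfl, rfl⟩ | ⟨rfl, rfl⟩ :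
      (q = 0 ∧ r = 0) ∨ (q = 0 ∧ r = 1) ∨ (q = 0 ∧ r = 2) ∨ (q = 1 ∧ r = 0) ∨ (q = 1 ∧ r = 1) ∨
        (q = 2 ∧ r = 0) := by omega
  · exact ⟨(isDepth_zero_iff.mp hq).2, (isDepth_zero_iff.mp hr).2⟩
  · exact absurd (by simpa using hweight) (hone δ hδ)
  · exact absurd (hα δ hδ (by simpa using hweight)) hδα
  · exact absurd (by simpa using hweight') (hone _ (S.isRoot_neg hδ))
  · have htop := hα _ (S.isRoot_add_depth t hδ hx hq)
      (by rw [S.apply_add_depth t hδ hx h0 hq hr]; norm_num)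
    exact absurd (by simpa using htop) hδ.1
  · have hneg := hα _ (S.isRoot_neg hδ) (by simpa using hweight')
    exact absurd (neg_eq_iff_eq_neg.mp hneg) hδα'

end UniqueWeightTwo

end LongRoot

omit [Fact p.Prime] [CharP k p] in
theorem toLieSubalgebra_eq_top [LieAlgebra.IsSimple k M] (t : IsRootTriple H α e f h)
    (hcomm : ∀ δ, IsRoot H δ → δ ≠ α → δ ≠ -α → ∀ x ∈ rootSp k M H δ, ⁅e, x⁆ = 0 ∧ ⁅f, x⁆ = 0) :
    t.isSl2Triple.toLieSubalgebra k = ⊤ := by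
  obtain ⟨he, hf⟩ := sl2Triple_mem_toLieSubalgebra (k := k) t.isSl2Triple
  refine eq_top_of_forall_mem_normalizer he t.e_ne_zero ?_
  refine S.induction_rootSp (zero_mem _) (fun _ _ => add_mem) fun δ z hz => ?_
  by_cases hz0 : z = 0
  · exact hz0 ▸ zero_mem _
  by_cases hδ : δ = 0
  · subst hδ
    have hzH := S.mem_of_mem_rootSp_zero hz
    refine mem_normalizer_toLieSubalgebra ?_ ?_
    · exact (t.mem_pos ⟨z, hzH⟩).symm ▸ Submodule.smul_mem _ _ he
    · exact (t.mem_neg ⟨z, hzH⟩).symm ▸ Submodule.smul_mem _ _ hf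
  by_cases hα : δ = α
  · obtain ⟨c, rfl⟩ := S.exists_eq_smul t.isRoot t.mem_pos t.e_ne_zero (hα ▸ hz)
    exact LieSubalgebra.le_normalizer _ (Submodule.smul_mem _ _ he)
  by_cases hα' : δ = -α
  · obtain ⟨c, rfl⟩ := S.exists_eq_smul t.symm.isRoot t.mem_neg t.f_ne_zero (hα' ▸ hz)
    exact LieSubalgebra.le_normalizer _ (Submodule.smul_mem _ _ hf)
  · obtain ⟨hez, hfz⟩ := hcomm δ (.of_mem hδ hz hz0) hα hα' z hz
    refine mem_normalizer_toLieSubalgebra ?_ ?_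
    · rw [← lie_skew, hez, neg_zero]
      exact zero_mem _
    · rw [← lie_skew, hfz, neg_zero]
      exact zero_mem _

theorem exists_isCubeZeroPair_or_not_linearIndependent [LieAlgebra.IsSimple k M]
    (t : IsRootTriple H α e f h) (he : ad k M e ^ 3 = 0) :
    (∃ e', IsCubeZeroPair k e e') ∨ ∀ x y : M, ⁅x, y⁆ = 0 → ¬ LinearIndependent k ![x, y] := by
  by_cases htwo : ∀ ε, IsRoot H ε → ε h = 2 → ε = α
  swap
  · push Not at htwo
    obtain ⟨β, hβ, hβh, hβα⟩ := htwo
    obtain ⟨e', f', h', t'⟩ := S.exists_isRootTriple hβ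
    exact .inl ⟨e', S.isCubeZeroPair_of_apply_eq_two t he t' hβα hβh⟩
  by_cases hone : ∀ ε, IsRoot H ε → ε h ≠ 1
  · have htop := S.toLieSubalgebra_eq_top t fun δ hδ hδα hδα' x hx =>
      S.lie_eq_zero_of_forall_apply_ne_one t he htwo hone hδ hδα hδα' hx
    exact .inr fun x y => sl2Triple_not_linearIndependent_of_lie_eq_zero
      (t := t.isSl2Triple) (htop ▸ LieSubalgebra.mem_top x) (htop ▸ LieSubalgebra.mem_top y)
  · push Not at hone
    obtain ⟨β, hβ, hβh⟩ := hone
    exact .inl (S.exists_isCubeZeroPair_of_apply_eq_one t he htwo hβ hβh)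

omit [Fact p.Prime] [CharP k p] [NeZero (2 : k)] in
theorem exists_isRoot (hM : ¬ IsLieAbelian M) : ∃ α, IsRoot H α := by
  by_contra! hno
  have hzero : ∀ m : M, m ∈ rootSp k M H 0 := by
    refine S.induction_rootSp (zero_mem _) (fun _ _ => add_mem) fun δ z hz => ?_
    by_cases hz0 : z = 0
    · exact hz0 ▸ zero_mem _
    by_cases hδ : δ = 0
    · exact hδ ▸ hz
    · exact absurd (.of_mem hδ hz hz0) (hno δ)
  refine hM ⟨fun x y => ?_⟩
  simpa using hzero y ⟨x, S.mem_of_mem_rootSp_zero (hzero x)⟩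

end IsClassicalCartan

theorem IsClassicalLie.exists_isClassicalCartan (p : ℕ) [Fact p.Prime] [CharP k p]
    (hM : IsClassicalLie k M) : ∃ H : LieSubalgebra k M, IsClassicalCartan p H := by
  obtain ⟨hcenter, -, H, hcartan, -, htop, hrank, hbracket, hstring⟩ := hM
  refine ⟨H, hcenter, hcartan, htop, fun hα => hrank _ hα.1 hα.2,
    fun hα => hbracket _ hα.1 hα.2, fun {α} hα β => ?_⟩
  have hp : 0 < p := (Fact.out : p.Prime).pos
  by_cases hβ : rootSp k M H β = ⊥
  · exact ⟨0, hp, by rwa [zero_smul, add_zero]⟩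
  obtain ⟨n, hn⟩ := hstring α hα.1 hα.2 β hβ
  refine ⟨n % p, Nat.mod_lt n hp, ?_⟩
  rwa [← Nat.cast_smul_eq_nsmul k, ← CharP.cast_eq_mod, Nat.cast_smul_eq_nsmul]

theorem exists_cube_zero_of_isSimple (p : ℕ) [Fact p.Prime] [CharP k p] [NeZero (2 : k)]
    [hsimple : LieAlgebra.IsSimple k M] (hM : IsClassicalLie k M) :
    5 ≤ p ∧ (∃ c : M, c ≠ 0 ∧ ad k M c ^ 3 = 0) ∧
      ((∃ c c' : M, IsCubeZeroPair k c c') ∨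
        ∀ x y : M, ⁅x, y⁆ = 0 → ¬ LinearIndependent k ![x, y]) := by
  obtain ⟨H, S⟩ := hM.exists_isClassicalCartan p
  obtain ⟨α, hα⟩ := S.exists_isRoot hsimple.non_abelian
  obtain ⟨β, e, f, h, t, he⟩ := S.exists_isRootTriple_ad_pow_three_eq_zero hα
  exact ⟨S.five_le t, ⟨e, t.e_ne_zero, he⟩,
    (S.exists_isCubeZeroPair_or_not_linearIndependent t he).imp_left fun hpair => ⟨e, hpair⟩⟩

end CubeZero

section LinearAlgebra

variable {k V : Type*} [Field k] [AddCommGroup V] [Module k V]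

theorem linearIndependent_map_pair_iff {W : Type*} [AddCommGroup W] [Module k W] {x y : V}
    (f : V →ₗ[k] W) (hf : Function.Injective f) :
    LinearIndependent k ![f x, f y] ↔ LinearIndependent k ![x, y] := by
  rw [← f.linearIndependent_iff (LinearMap.ker_eq_bot.mpr hf), ← FinVec.map_eq]
  rfl

theorem linearIndependent_coe_iff {N : Submodule k V} {x y : N} :
    LinearIndependent k ![(x : V), (y : V)] ↔ LinearIndependent k ![x, y] :=
  linearIndependent_map_pair_iff N.subtype N.injective_subtype

end LinearAlgebra

section Semisimple

variable {k L ι : Type*} [Field k] [LieRing L] [LieAlgebra k L] {I : ι → LieIdeal k L} {i j : ι}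
variable {x y : L}

theorem eq_zero_of_mem_of_mem (hI : iSupIndep I) (hij : i ≠ j) (hi : x ∈ I i) (hj : x ∈ I j) :
    x = 0 :=
  (LieSubmodule.mem_bot x).mp ((hI.pairwiseDisjoint hij).le_bot ⟨hi, hj⟩)

theorem lie_eq_zero_of_mem_of_mem (hI : iSupIndep I) (hij : i ≠ j) (hx : x ∈ I i) (hy : y ∈ I j) :
    ⁅x, y⁆ = 0 :=
  eq_zero_of_mem_of_mem hI hij (lie_mem_left k L (I i) x y hx) (lie_mem_right k L (I j) x y hy)

theorem linearIndependent_of_mem_of_mem (hI : iSupIndep I) (hij : i ≠ j) (hx : x ∈ I i)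
    (hx0 : x ≠ 0) (hy : y ∈ I j) (hy0 : y ≠ 0) : LinearIndependent k ![x, y] := by
  rw [LinearIndependent.pair_iff' hx0]
  rintro a rfl
  exact hy0 (eq_zero_of_mem_of_mem hI hij ((I i).smul_mem a hx) hy)

theorem end_eq_zero_of_forall_mem (htop : iSup I = ⊤) {T : Module.End k L}
    (hT : ∀ i, ∀ x ∈ I i, T x = 0) : T = 0 := by
  ext x
  exact LieSubmodule.iSup_induction I (motive := fun x => T x = 0) (htop ▸ LieSubmodule.mem_top x)
    hT (map_zero T) fun y z hy hz => by rw [map_add, hy, hz, add_zero]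

theorem ad_pow_coe_eq_zero (hI : iSupIndep I) (htop : iSup I = ⊤) {c : I i} {n : ℕ} (hn : n ≠ 0)
    (hc : ad k (I i) c ^ n = 0) : ad k L (c : L) ^ n = 0 := by
  refine end_eq_zero_of_forall_mem htop fun j m hm => ?_
  by_cases hij : i = j
  · subst hij
    exact (LieSubalgebra.coe_ad_pow k L (I i).toLieSubalgebra c ⟨m, hm⟩ n).symm.trans
      (congrArg Subtype.val (LinearMap.congr_fun hc ⟨m, hm⟩))
  · obtain ⟨n, rfl⟩ := Nat.exists_eq_succ_of_ne_zero hn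
    rw [pow_succ, Module.End.mul_apply, LieAlgebra.ad_apply,
      lie_eq_zero_of_mem_of_mem hI hij c.2 hm, map_zero]

theorem IsCubeZeroPair.coe (hI : iSupIndep I) (htop : iSup I = ⊤) {c c' : I i}
    (hc : IsCubeZeroPair k c c') : IsCubeZeroPair k (c : L) (c' : L) where
  linearIndependent := (linearIndependent_coe_iff (N := (I i).toSubmodule)).mpr hc.linearIndependent
  lie_eq_zero := congrArg Subtype.val hc.lie_eq_zero
  left_cube := ad_pow_coe_eq_zero hI htop three_ne_zero hc.left_cube
  right_cube := ad_pow_coe_eq_zero hI htop three_ne_zero hc.right_cube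

theorem center_eq_bot_of_iSup_eq_top (hI : iSupIndep I) (htop : iSup I = ⊤)
    (hcenter : ∀ i, LieAlgebra.center k (I i) = ⊥) : LieAlgebra.center k L = ⊥ := by
  rw [LieSubmodule.eq_bot_iff]
  intro x hx
  rw [LieModule.mem_maxTrivSubmodule] at hx
  have hsum : x ∈ ⨆ i, (I i).toSubmodule := by
    rw [← LieSubmodule.iSup_toSubmodule, htop]
    trivial
  obtain ⟨f, hf, rfl⟩ := (Submodule.mem_iSup_iff_exists_finsupp _ _).mp hsum
  refine Finset.sum_eq_zero fun j _ => ?_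
  suffices (⟨f j, hf j⟩ : I j) ∈ LieAlgebra.center k (I j) by
    rw [hcenter j, LieSubmodule.mem_bot] at this
    exact congrArg Subtype.val this
  rw [LieModule.mem_maxTrivSubmodule]
  intro m
  have hm : ⁅(m : L), f.sum fun _ v => v⁆ = 0 := hx m
  rw [Finsupp.sum, lie_sum, Finset.sum_eq_single j] at hm
  · exact Subtype.ext hm
  · exact fun i _ hij => lie_eq_zero_of_mem_of_mem hI hij.symm m.2 (hf i)
  · intro hj
    rw [Finsupp.notMem_support_iff.mp hj, lie_zero]

end Semisimple

theorem IsClassicalSemisimple.center_eq_bot {k L : Type} [Field k] [LieRing L] [LieAlgebra k L]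
    (hL : IsClassicalSemisimple k L) : LieAlgebra.center k L = ⊥ := by
  obtain ⟨ι, -, I, hI, hind, htop⟩ := hL
  exact center_eq_bot_of_iSup_eq_top hind htop fun i => (hI i).2.1

theorem IsClassicalSemisimple.exists_isCubeZeroPair_or_not_linearIndependent {k L : Type} [Field k]
    [LieRing L] [LieAlgebra k L] (p : ℕ) [Fact p.Prime] [CharP k p] [NeZero (2 : k)]
    (hL : IsClassicalSemisimple k L) :
    (5 ≤ p ∧ ∃ c c' : L, IsCubeZeroPair k c c') ∨
      ∀ x y : L, ⁅x, y⁆ = 0 → ¬ LinearIndependent k ![x, y] := by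
  obtain ⟨ι, -, I, hI, hind, htop⟩ := hL
  have hcube i := have := (hI i).1; exists_cube_zero_of_isSimple p (hI i).2
  rcases subsingleton_or_nontrivial ι with hι | ⟨i, j, hij⟩
  swap
  · obtain ⟨hp5, ⟨c, hc0, hc⟩, -⟩ := hcube i
    obtain ⟨-, ⟨c', hc0', hc'⟩, -⟩ := hcube j
    exact .inl ⟨hp5, c, c',
      linearIndependent_of_mem_of_mem hind hij c.2 (by simpa using hc0) c'.2 (by simpa using hc0'),
      lie_eq_zero_of_mem_of_mem hind hij c.2 c'.2,
      ad_pow_coe_eq_zero hind htop three_ne_zero hc,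
      ad_pow_coe_eq_zero hind htop three_ne_zero hc'⟩
  rcases isEmpty_or_nonempty ι with hι' | ⟨⟨i⟩⟩
  · refine .inr fun x y _ hxy => hxy.ne_zero 0 ?_
    rw [iSup_of_empty] at htop
    exact (LieSubmodule.mem_bot x).mp (htop ▸ LieSubmodule.mem_top x)
  have hmem (x : L) : x ∈ I i := by
    have hx := htop ▸ LieSubmodule.mem_top x
    rwa [@ciSup_subsingleton _ _ _ _ i] at hx
  obtain ⟨hp5, -, ⟨c, c', hc⟩ | hno⟩ := hcube i
  · exact .inl ⟨hp5, c, c', hc.coe hind htop⟩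
  · exact .inr fun x y hxy hli => hno ⟨x, hmem x⟩ ⟨y, hmem y⟩ (Subtype.ext hxy)
      ((linearIndependent_coe_iff (N := (I i).toSubmodule)).mp hli)

section PolyCurves

/-- Polynomial maps from the affine line to a vector space. -/
def polyCurves (k V : Type*) [Field k] [AddCommGroup V] [Module k V] : Submodule k (k → V) :=
  Submodule.span k {X | ∃ (n : ℕ) (v : V), X = fun s => s ^ n • v}

variable {k V V' W : Type*} [Field k] [AddCommGroup V] [Module k V] [AddCommGroup V']
  [Module k V'] [AddCommGroup W] [Module k W]

theorem pow_smul_mem_polyCurves (n : ℕ) (v : V) : (fun s : k => s ^ n • v) ∈ polyCurves k V :=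
  Submodule.subset_span ⟨n, v, rfl⟩

theorem const_mem_polyCurves (v : V) : (fun _ : k => v) ∈ polyCurves k V := by
  simpa using pow_smul_mem_polyCurves (k := k) 0 v

theorem linear_mem_polyCurves (x y : V) : (fun s : k => s • x + y) ∈ polyCurves k V := by
  simpa [Pi.add_def] using
    add_mem (pow_smul_mem_polyCurves (k := k) 1 x) (const_mem_polyCurves y)

theorem quadratic_mem_polyCurves (x y z : V) :
    (fun s : k => s ^ 2 • x + (s • y + z)) ∈ polyCurves k V :=
  add_mem (pow_smul_mem_polyCurves 2 x) (linear_mem_polyCurves y z)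

theorem map_mem_polyCurves (f : V →ₗ[k] W) {X : k → V} (hX : X ∈ polyCurves k V) :
    (fun s => f (X s)) ∈ polyCurves k W := by
  suffices polyCurves k V ≤ (polyCurves k W).comap (f.compLeft k) from this hX
  refine Submodule.span_le.mpr ?_
  rintro _ ⟨n, v, rfl⟩
  change (fun s => f (s ^ n • v)) ∈ polyCurves k W
  simpa only [map_smul] using pow_smul_mem_polyCurves n (f v)

theorem bilin_mem_polyCurves (B : V →ₗ[k] V' →ₗ[k] W) {X : k → V} {Y : k → V'}
    (hX : X ∈ polyCurves k V) (hY : Y ∈ polyCurves k V') :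
    (fun s => B (X s) (Y s)) ∈ polyCurves k W := by
  induction hX, hY using Submodule.span_induction₂ with
  | mem_mem _ _ hX hY =>
    obtain ⟨m, v, rfl⟩ := hX
    obtain ⟨n, w, rfl⟩ := hY
    convert pow_smul_mem_polyCurves (k := k) (m + n) (B v w) using 2 with s
    simp only [map_smul, LinearMap.smul_apply, smul_smul, pow_add, mul_comm]
  | zero_left => simpa using const_mem_polyCurves (0 : W)
  | zero_right => simpa using const_mem_polyCurves (0 : W)
  | add_left _ _ _ _ _ _ h h' => simpa [Pi.add_def] using add_mem h h'
  | add_right _ _ _ _ _ _ h h' => simpa [Pi.add_def] using add_mem h h'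
  | smul_left r _ _ _ _ h => simpa [Pi.smul_def] using Submodule.smul_mem _ r h
  | smul_right r _ _ _ _ h => simpa [Pi.smul_def] using Submodule.smul_mem _ r h

theorem prodMk_mem_polyCurves {X : k → V} {Y : k → W} (hX : X ∈ polyCurves k V)
    (hY : Y ∈ polyCurves k W) : (fun s => (X s, Y s)) ∈ polyCurves k (V × W) := by
  simpa [Pi.add_def] using add_mem (map_mem_polyCurves (LinearMap.inl k V W) hX)
    (map_mem_polyCurves (LinearMap.inr k V W) hY)

theorem exists_eval_eq_of_mem_polyCurves {g : k → k} (hg : g ∈ polyCurves k k) :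
    ∃ P : Polynomial k, ∀ s, P.eval s = g s := by
  induction hg using Submodule.span_induction with
  | mem _ h =>
    obtain ⟨n, v, rfl⟩ := h
    exact ⟨Polynomial.monomial n v, fun s => Polynomial.eval_monomial.trans (mul_comm _ _)⟩
  | zero => exact ⟨0, fun s => by simp⟩
  | add _ _ _ _ h h' =>
    obtain ⟨P, hP⟩ := h
    obtain ⟨Q, hQ⟩ := h'
    exact ⟨P + Q, fun s => by simp [hP, hQ]⟩
  | smul a _ _ h =>
    obtain ⟨P, hP⟩ := h
    exact ⟨a • P, fun s => by simp [hP]⟩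

theorem finite_setOf_eq_zero_of_mem_polyCurves {X : k → V} (hX : X ∈ polyCurves k V) {s₀ : k}
    (h₀ : X s₀ ≠ 0) : {s | X s = 0}.Finite := by
  obtain ⟨φ, hφ⟩ := not_forall.mp (mt (Module.forall_dual_apply_eq_zero_iff k _).mp h₀)
  obtain ⟨P, hP⟩ := exists_eval_eq_of_mem_polyCurves (map_mem_polyCurves φ hX)
  have hP0 : P ≠ 0 := by
    rintro rfl
    exact hφ (by rw [← hP, Polynomial.eval_zero])
  refine (Polynomial.finite_setOfPred_isRoot hP0).subset fun s (hs : X s = 0) => ?_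
  rw [Set.mem_ofPred_eq, Polynomial.IsRoot, hP, hs, map_zero]

theorem eq_zero_of_mem_polyCurves [Infinite k] {X : k → V} (hX : X ∈ polyCurves k V)
    (h : ∀ s, s ≠ 0 → X s = 0) : X 0 = 0 := by
  by_contra h0
  exact (Set.finite_singleton (0 : k)).infinite_compl
    ((finite_setOf_eq_zero_of_mem_polyCurves hX h0).subset h)

end PolyCurves

section ZariskiTopology

variable {k V : Type} [Field k] [AddCommGroup V] [Module k V] {X : k → V}

theorem comp_mem_polyCurves (hX : X ∈ polyCurves k V) {f : V → k} (hf : f ∈ polyFuns k V) :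
    (fun s => f (X s)) ∈ polyCurves k k := by
  induction hf using Algebra.adjoin_induction with
  | mem f hf =>
    obtain ⟨φ, rfl⟩ := hf
    exact map_mem_polyCurves φ hX
  | algebraMap c => exact const_mem_polyCurves c
  | add f g _ _ hf hg => exact add_mem hf hg
  | mul f g _ _ hf hg => exact bilin_mem_polyCurves (LinearMap.mul k k) hf hg

theorem finite_setOf_notMem_of_mem_polyCurves (hX : X ∈ polyCurves k V) {U : Set V}
    (hU : @IsOpen V (zar k V) U) {s₀ : k} (h₀ : X s₀ ∈ U) : {s | X s ∉ U}.Finite := by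
  change TopologicalSpace.GenerateOpen _ U at hU
  induction hU with
  | basic U hU =>
    obtain ⟨f, hf, rfl⟩ := hU
    refine (finite_setOf_eq_zero_of_mem_polyCurves (comp_mem_polyCurves hX hf) h₀).subset
      fun s hs => ?_
    exact not_not.mp hs
  | univ => simp
  | inter U U' _ _ h h' =>
    refine ((h h₀.1).union (h' h₀.2)).subset fun s hs => ?_
    exact not_and_or.mp hs
  | sUnion A _ h =>
    obtain ⟨U, hUA, hU⟩ := h₀
    exact (h U hUA hU).subset fun s hs hsU => hs ⟨U, hUA, hsU⟩

end ZariskiTopology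

section Planes

section LinearAlgebra

variable {k V : Type*} [Field k] [AddCommGroup V] [Module k V] {x y z : V}

/-- The span of two vectors, in the form used by `planeMk`. -/
def plane (k : Type*) {V : Type*} [Field k] [AddCommGroup V] [Module k V] (x y : V) :
    Submodule k V :=
  Submodule.span k (Set.range ![x, y])

theorem mem_plane : z ∈ plane k x y ↔ ∃ a b : k, a • x + b • y = z := by
  rw [plane, Matrix.range_cons_cons_empty, Submodule.mem_span_pair]

theorem left_mem_plane (x y : V) : x ∈ plane k x y := Submodule.subset_span ⟨0, rfl⟩

theorem right_mem_plane (x y : V) : y ∈ plane k x y := Submodule.subset_span ⟨1, rfl⟩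

theorem plane_comm (x y : V) : plane k x y = plane k y x := by
  rw [plane, plane, Matrix.range_cons_cons_empty, Matrix.range_cons_cons_empty, Set.pair_comm]

theorem finrank_plane (h : LinearIndependent k ![x, y]) : Module.finrank k (plane k x y) = 2 := by
  rw [plane, finrank_span_eq_card h, Fintype.card_fin]

theorem plane_eq_of_mem {e : Submodule k V} (he : Module.finrank k e = 2)
    (h : LinearIndependent k ![x, y]) (hx : x ∈ e) (hy : y ∈ e) : plane k x y = e := by
  have : FiniteDimensional k e := Module.finite_of_finrank_pos (by omega)
  refine Submodule.eq_of_le_of_finrank_eq (Submodule.span_le.mpr ?_) (by rw [finrank_plane h, he])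
  rw [Matrix.range_cons_cons_empty]
  exact Set.pair_subset hx hy

theorem exists_linearIndependent_of_mem {e : Submodule k V} (he : Module.finrank k e = 2)
    (hz : z ∈ e) (hz0 : z ≠ 0) : ∃ w ∈ e, LinearIndependent k ![z, w] := by
  have hz0' : (⟨z, hz⟩ : e) ≠ 0 := Subtype.coe_ne_coe.mp hz0
  obtain ⟨w, hw⟩ := exists_linearIndependent_pair_of_one_lt_finrank (R := k) (by omega) hz0'
  exact ⟨w, w.2, linearIndependent_coe_iff.mpr hw⟩

end LinearAlgebra

variable {k L : Type*} [Field k] [LieRing L] [LieAlgebra k L] {p : ℕ} {x y x' y' z : L}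

/-- The pair `x`, `y` spans a two-dimensional elementary abelian subalgebra, for the `p`-map
determined by `ad (x^[p]) = (ad x)^p` when the centre is trivial. -/
structure IsElemPair (p : ℕ) (k : Type*) {L : Type*} [Field k] [LieRing L] [LieAlgebra k L]
    (x y : L) : Prop where
  linearIndependent : LinearIndependent k ![x, y]
  lie_eq_zero : ⁅x, y⁆ = 0
  left_pow : ad k L x ^ p = 0
  right_pow : ad k L y ^ p = 0

/-- The planes spanned by elementary abelian pairs. -/
def elemPlanes (p : ℕ) (k L : Type*) [Field k] [LieRing L] [LieAlgebra k L] :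
    Set (Submodule k L) :=
  {e | ∃ x y, IsElemPair p k x y ∧ plane k x y = e}

theorem commute_ad_of_lie_eq_zero (h : ⁅x, y⁆ = 0) : Commute (ad k L x) (ad k L y) := by
  ext v
  rw [Module.End.mul_apply, Module.End.mul_apply]
  simp only [LieAlgebra.ad_apply]
  rw [leibniz_lie, h, zero_lie, zero_add]

theorem charP_end [Nontrivial L] [CharP k p] : CharP (Module.End k L) p :=
  charP_of_injective_algebraMap (algebraMap k (Module.End k L)).injective p

namespace IsElemPair

theorem mem_elemPlanes (g : IsElemPair p k x y) : plane k x y ∈ elemPlanes p k L := ⟨x, y, g, rfl⟩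

theorem lie_eq_zero_of_mem (g : IsElemPair p k x y) (hx : x' ∈ plane k x y)
    (hy : y' ∈ plane k x y) : ⁅x', y'⁆ = 0 := by
  have hyx : ⁅y, x⁆ = 0 := by rw [← lie_skew, g.lie_eq_zero, neg_zero]
  obtain ⟨a, b, rfl⟩ := mem_plane.mp hx
  obtain ⟨c, d, rfl⟩ := mem_plane.mp hy
  simp [g.lie_eq_zero, hyx]

theorem swap (g : IsElemPair p k x y) : IsElemPair p k y x :=
  ⟨LinearIndependent.pair_symm_iff.mp g.linearIndependent,
    g.lie_eq_zero_of_mem (right_mem_plane x y) (left_mem_plane x y), g.right_pow, g.left_pow⟩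

variable [Fact p.Prime] [CharP k p]

theorem ad_pow_eq_zero (g : IsElemPair p k x y) (hz : z ∈ plane k x y) : ad k L z ^ p = 0 := by
  have : Nontrivial L := ⟨x, 0, g.linearIndependent.ne_zero 0⟩
  have : CharP (Module.End k L) p := charP_end
  obtain ⟨a, b, rfl⟩ := mem_plane.mp hz
  have hcomm := ((commute_ad_of_lie_eq_zero (k := k) g.lie_eq_zero).smul_left a).smul_right b
  rw [map_add, map_smul, map_smul, add_pow_char_of_commute p hcomm, smul_pow, smul_pow,
    g.left_pow, g.right_pow, smul_zero, smul_zero, add_zero]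

theorem of_mem (g : IsElemPair p k x y) (h : LinearIndependent k ![x', y'])
    (hx : x' ∈ plane k x y) (hy : y' ∈ plane k x y) :
    IsElemPair p k x' y' ∧ plane k x' y' = plane k x y :=
  ⟨⟨h, g.lie_eq_zero_of_mem hx hy, g.ad_pow_eq_zero hx, g.ad_pow_eq_zero hy⟩,
    plane_eq_of_mem (finrank_plane g.linearIndependent) h hx hy⟩

theorem exists_left (g : IsElemPair p k x y) (hz : z ∈ plane k x y) (hz0 : z ≠ 0) :
    ∃ w, IsElemPair p k z w ∧ plane k z w = plane k x y := by
  obtain ⟨w, hw, hli⟩ := exists_linearIndependent_of_mem (finrank_plane g.linearIndependent) hz hz0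
  exact ⟨w, g.of_mem hli hz hw⟩

theorem smul_smul_add_smul (g : IsElemPair p k x y) {a b d : k} (ha : a ≠ 0) (hb : b ≠ 0) :
    IsElemPair p k (a • x) (d • x + b • y) ∧ plane k (a • x) (d • x + b • y) = plane k x y := by
  refine g.of_mem ?_ (Submodule.smul_mem _ a (left_mem_plane x y)) (mem_plane.mpr ⟨d, b, rfl⟩)
  simpa using (LinearIndependent.pair_add_smul_add_smul_iff a 0 d b).mpr
    ⟨g.linearIndependent, by simpa using ⟨ha, hb⟩⟩

theorem linearIndependent_map_or_exists_map_eq_zero {W : Type*} [AddCommGroup W] [Module k W]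
    (g : IsElemPair p k x y) (f : L →ₗ[k] W) :
    LinearIndependent k ![f x, f y] ∨
      ∃ z w, IsElemPair p k z w ∧ plane k z w = plane k x y ∧ f z = 0 := by
  rw [or_iff_not_imp_left]
  intro h
  simp only [LinearIndependent.pair_iff, not_forall] at h
  obtain ⟨a, b, hab, hne⟩ := h
  have hz : a • x + b • y ≠ 0 := fun h0 =>
    hne (LinearIndependent.pair_iff.mp g.linearIndependent a b h0)
  obtain ⟨w, gw, hw⟩ := g.exists_left (mem_plane.mpr ⟨a, b, rfl⟩) hz
  exact ⟨_, w, gw, hw, by rw [map_add, map_smul, map_smul, hab]⟩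

end IsElemPair

end Planes

section Linked

variable {k L : Type} [Field k] [LieRing L] [LieAlgebra k L]

section PlaneTop

variable {C : Set (Submodule k L)} {X Y : k → L} {e e' e'' : Submodule k L}

theorem finite_setOf_planeMk_notMem (hX : X ∈ polyCurves k L) (hY : Y ∈ polyCurves k L)
    (h : ∀ s, (X s, Y s) ∈ planePairs C) {U : Set C} (hU : @IsOpen C (planeTop C) U) {s₀ : k}
    (h₀ : planeMk C ⟨_, h s₀⟩ ∈ U) : {s | planeMk C ⟨_, h s⟩ ∉ U}.Finite := by
  obtain ⟨W, hW, hWU⟩ : ∃ W, @IsOpen (L × L) (zar k (L × L)) W ∧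
    Subtype.val ⁻¹' W = planeMk C ⁻¹' U := hU
  have hiff (s : k) : (X s, Y s) ∈ W ↔ planeMk C ⟨_, h s⟩ ∈ U := Set.ext_iff.mp hWU ⟨_, h s⟩
  simpa only [hiff] using
    finite_setOf_notMem_of_mem_polyCurves (prodMk_mem_polyCurves hX hY) hW ((hiff s₀).mpr h₀)

theorem isPreconnected_range_planeMk [Infinite k] (hX : X ∈ polyCurves k L)
    (hY : Y ∈ polyCurves k L) (h : ∀ s, (X s, Y s) ∈ planePairs C) :
    @IsPreconnected C (planeTop C) (Set.range fun s => planeMk C ⟨_, h s⟩) := by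
  let := planeTop C
  refine IsPreirreducible.isPreconnected ?_
  rintro U U' hU hU' ⟨_, ⟨s, rfl⟩, hs⟩ ⟨_, ⟨s', rfl⟩, hs'⟩
  obtain ⟨r, hr⟩ := ((finite_setOf_planeMk_notMem hX hY h hU hs).union
    (finite_setOf_planeMk_notMem hX hY h hU' hs')).infinite_compl.nonempty
  rw [Set.mem_compl_iff, Set.mem_union, not_or] at hr
  exact ⟨_, ⟨r, rfl⟩, not_not.mp hr.1, not_not.mp hr.2⟩

/-- Two planes lie in a common preconnected subset of the collection `C` of planes. -/
def Linked (C : Set (Submodule k L)) (e e' : Submodule k L) : Prop :=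
  ∃ (he : e ∈ C) (he' : e' ∈ C) (A : Set C),
    @IsPreconnected C (planeTop C) A ∧ ⟨e, he⟩ ∈ A ∧ ⟨e', he'⟩ ∈ A

theorem Linked.refl (he : e ∈ C) : Linked C e e :=
  ⟨he, he, {⟨e, he⟩}, @isPreconnected_singleton C (planeTop C) _, rfl, rfl⟩

theorem Linked.trans (h : Linked C e e') (h' : Linked C e' e'') : Linked C e e'' := by
  let := planeTop C
  obtain ⟨he, he', A, hA, heA, heA'⟩ := h
  obtain ⟨_, he'', B, hB, heB', heB''⟩ := h'
  exact ⟨he, he'', A ∪ B, hA.union _ heA' heB' hB, Or.inl heA, Or.inr heB''⟩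

theorem isPreconnected_univ_of_linked (he : e ∈ C) (h : ∀ e' ∈ C, Linked C e' e) :
    @IsPreconnected C (planeTop C) Set.univ := by
  let := planeTop C
  refine isPreconnected_of_forall ⟨e, he⟩ fun e' _ => ?_
  obtain ⟨_, _, A, hA, heA', heA⟩ := h e' e'.2
  exact ⟨A, Set.subset_univ A, heA, heA', hA⟩

end PlaneTop

variable [Infinite k] {p : ℕ} {X Y : k → L}

theorem linked_of_mem_polyCurves (hX : X ∈ polyCurves k L) (hY : Y ∈ polyCurves k L)
    (h : ∀ s, IsElemPair p k (X s) (Y s)) (s t : k) :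
    Linked (elemPlanes p k L) (plane k (X s) (Y s)) (plane k (X t) (Y t)) :=
  ⟨(h s).mem_elemPlanes, (h t).mem_elemPlanes, _, isPreconnected_range_planeMk hX hY fun s =>
    ⟨(h s).linearIndependent, (h s).mem_elemPlanes⟩, ⟨s, rfl⟩, ⟨t, rfl⟩⟩

end Linked

section Limits

variable {k L : Type*} [Field k] [LieRing L] [LieAlgebra k L] {X Y : k → L}

theorem ad_pow_apply_mem_polyCurves (hX : X ∈ polyCurves k L) (n : ℕ) (v : L) :
    (fun s => (ad k L (X s) ^ n) v) ∈ polyCurves k L := by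
  induction n with
  | zero => exact const_mem_polyCurves v
  | succ n ih =>
    simp only [pow_succ', Module.End.mul_apply]
    exact bilin_mem_polyCurves (ad k L : L →ₗ[k] Module.End k L) hX ih

variable [Infinite k] {p : ℕ}

theorem ad_pow_zero_eq_zero_of_mem_polyCurves (hX : X ∈ polyCurves k L)
    (h : ∀ s, s ≠ 0 → ad k L (X s) ^ p = 0) : ad k L (X 0) ^ p = 0 := by
  ext v
  refine eq_zero_of_mem_polyCurves (ad_pow_apply_mem_polyCurves hX p v) fun s hs => ?_
  rw [h s hs, LinearMap.zero_apply]

theorem isElemPair_of_forall_ne_zero (hX : X ∈ polyCurves k L) (hY : Y ∈ polyCurves k L)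
    (h : ∀ s, s ≠ 0 → IsElemPair p k (X s) (Y s)) (h₀ : LinearIndependent k ![X 0, Y 0]) (s : k) :
    IsElemPair p k (X s) (Y s) := by
  rcases eq_or_ne s 0 with rfl | hs
  · exact ⟨h₀,
      eq_zero_of_mem_polyCurves (bilin_mem_polyCurves (ad k L : L →ₗ[k] Module.End k L) hX hY)
        fun s hs => (h s hs).lie_eq_zero,
      ad_pow_zero_eq_zero_of_mem_polyCurves hX fun s hs => (h s hs).left_pow,
      ad_pow_zero_eq_zero_of_mem_polyCurves hY fun s hs => (h s hs).right_pow⟩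
  · exact h s hs

end Limits

section Heisenberg

open Polynomial

variable {R : Type*} [Ring R]

theorem derivative_pow_of_commutator {B z : R[X]}
    (hz : derivative B * B = B * derivative B + z) (hzB : Commute z B) (n : ℕ) :
    derivative (B ^ (n + 2)) =
      (n + 2) • (B ^ (n + 1) * derivative B) + (n + 2).choose 2 • (B ^ n * z) := by
  induction n with
  | zero =>
    rw [pow_two, derivative_mul, hz, zero_add, Nat.choose_self, pow_zero, pow_one, one_mul,
      one_smul, two_smul]
    abel
  | succ n ih =>
    have hchoose : (n + 1 + 2).choose 2 = (n + 2) + (n + 2).choose 2 := by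
      rw [Nat.choose_succ_succ' (n + 2) 1, Nat.choose_one_right]
    calc derivative (B ^ (n + 1 + 2))
        = ((n + 2) • (B ^ (n + 1) * derivative B) + (n + 2).choose 2 • (B ^ n * z)) * B +
            B ^ (n + 2) * derivative B := by rw [← ih, ← derivative_mul, ← pow_succ]
      _ = (n + 2) • (B ^ (n + 1) * (derivative B * B)) + (n + 2).choose 2 • (B ^ n * (z * B)) +
            B ^ (n + 2) * derivative B := by
          rw [add_mul, smul_mul_assoc, smul_mul_assoc, mul_assoc, mul_assoc]
      _ = (n + 2) • (B ^ (n + 2) * derivative B + B ^ (n + 1) * z) +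
            (n + 2).choose 2 • (B ^ (n + 1) * z) + B ^ (n + 2) * derivative B := by
          rw [hz, hzB.eq, mul_add, ← mul_assoc, ← pow_succ, ← mul_assoc, ← pow_succ]
      _ = (n + 1 + 2) • (B ^ (n + 2) * derivative B) +
            (n + 1 + 2).choose 2 • (B ^ (n + 1) * z) := by
          rw [hchoose]
          module

theorem eval_one_pow (Q : R[X]) (n : ℕ) : (Q ^ n).eval 1 = Q.eval 1 ^ n :=
  map_pow (eval₂RingHom' (RingHom.id R) 1 Commute.one_right) Q n

variable {p : ℕ} [Fact p.Prime] [CharP R p]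

theorem derivative_pow_char_of_commutator (hp3 : 3 ≤ p) {B z : R[X]}
    (hz : derivative B * B = B * derivative B + z) (hzB : Commute z B) :
    derivative (B ^ p) = 0 := by
  have hp : p.Prime := Fact.out
  have hchoose : ((p.choose 2 : ℕ) : R[X]) = 0 :=
    (CharP.cast_eq_zero_iff R[X] p _).mpr (hp.dvd_choose_self two_ne_zero (by omega))
  have h := derivative_pow_of_commutator hz hzB (p - 2)
  rw [Nat.sub_add_cancel (by omega)] at h
  rw [h, nsmul_eq_mul, nsmul_eq_mul, hchoose, CharP.cast_eq_zero, zero_mul, zero_mul, add_zero]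

theorem coeff_eq_zero_of_derivative_eq_zero {Q : R[X]} (hQ : derivative Q = 0) {n : ℕ}
    (hn : ¬p ∣ n) : Q.coeff n = 0 := by
  obtain ⟨m, rfl⟩ := Nat.exists_eq_succ_of_ne_zero (n := n) (by rintro rfl; exact hn (dvd_zero p))
  have hunit : IsUnit ((m + 1 : ℕ) : R) := (CharP.isUnit_natCast_iff Fact.out).mpr hn
  have h := coeff_derivative Q m
  rw [hQ, coeff_zero, ← Nat.cast_add_one] at h
  exact hunit.mul_left_eq_zero.mp h.symm

theorem eval_one_of_derivative_eq_zero {Q : R[X]} (hQ : derivative Q = 0)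
    (hdeg : Q.natDegree ≤ p) : Q.eval 1 = Q.coeff 0 + Q.coeff p := by
  have hp : p ≠ 0 := (Fact.out : p.Prime).ne_zero
  rw [eval_eq_sum_range' (n := p + 1) (by omega), Finset.sum_range_succ,
    Finset.sum_eq_single_of_mem 0 (Finset.mem_range.mpr hp.bot_lt)]
  · simp
  · intro i hi hi0
    rw [coeff_eq_zero_of_derivative_eq_zero hQ, zero_mul]
    exact Nat.not_dvd_of_pos_of_lt hi0.bot_lt (Finset.mem_range.mp hi)

/-- The derivative of `(c X + a) ^ p` is zero, so the value of this polynomial at `1` is the sum of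
its coefficients in degrees `0` and `p`. -/
theorem add_pow_of_central_commutator (hp3 : 3 ≤ p) {a c z : R} (hz : c * a = a * c + z)
    (hza : Commute z a) (hzc : Commute z c) : (a + c) ^ p = a ^ p + c ^ p := by
  have hB : derivative (C c * X + C a) = C c := by simp
  have hder : derivative ((C c * X + C a) ^ p) = 0 := by
    refine derivative_pow_char_of_commutator hp3 (z := C z) ?_ ?_
    · rw [hB, mul_add, add_mul, ← C_mul, hz, C_add, C_mul, mul_assoc (C c) X, X_mul_C, add_assoc]
    · exact (((hzc.map C).mul_right (commute_X _).symm)).add_right (hza.map C)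
  have hdeg : (C c * X + C a).natDegree ≤ 1 := natDegree_linear_le
  have hconst : ((C c * X + C a) ^ p).coeff 0 = a ^ p := by
    rw [← constantCoeff_apply, map_pow]
    simp [constantCoeff_apply]
  have hlead : ((C c * X + C a) ^ p).coeff p = c ^ p := by
    simpa using coeff_pow_of_natDegree_le (m := p) hdeg
  calc (a + c) ^ p = ((C c * X + C a) ^ p).eval 1 := by simp [eval_one_pow, add_comm]
    _ = a ^ p + c ^ p := by
      rw [eval_one_of_derivative_eq_zero (p := p) hder
        ((natDegree_pow_le_of_le p hdeg).trans (mul_one p).le), hconst, hlead]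

end Heisenberg

section Exponential

section QuadExp

variable {k V : Type*} [Field k] [AddCommGroup V] [Module k V] {N : V →ₗ[k] V}

/-- The exponential of `t • N`, truncated after the quadratic term. -/
def quadExp (N : V →ₗ[k] V) (t : k) : V →ₗ[k] V :=
  LinearMap.id + t • N + t ^ 2 • (2⁻¹ : k) • (N ∘ₗ N)

theorem quadExp_apply (N : V →ₗ[k] V) (t : k) (x : V) :
    quadExp N t x = x + t • N x + t ^ 2 • (2⁻¹ : k) • N (N x) := rfl

theorem quadExp_zero_apply (N : V →ₗ[k] V) (x : V) : quadExp N (0 : k) x = x := by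
  simp [quadExp_apply]

theorem quadExp_apply_of_apply_eq_zero {x : V} (hx : N x = 0) (t : k) : quadExp N t x = x := by
  simp [quadExp_apply, hx]

theorem quadExp_mem_polyCurves (N : V →ₗ[k] V) (x : V) :
    (fun t : k => quadExp N t x) ∈ polyCurves k V := by
  convert quadratic_mem_polyCurves (k := k) ((2⁻¹ : k) • N (N x)) (N x) x using 2 with t
  rw [quadExp_apply]
  abel

/-- A polynomial curve `X` such that `X s` is proportional to `quadExp N s⁻¹ x` for `s ≠ 0`, so
that `X 0` spans the limit of the line through `quadExp N t x` as `t` tends to infinity. -/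
structure IsExpLimitCurve (N : V →ₗ[k] V) (x : V) (X : k → V) : Prop where
  mem_polyCurves : X ∈ polyCurves k V
  exists_eq_smul : ∀ s, s ≠ 0 → ∃ a : k, a ≠ 0 ∧ X s = a • quadExp N s⁻¹ x

namespace IsExpLimitCurve

theorem const {x : V} (hx : N x = 0) : IsExpLimitCurve N x fun _ : k => x :=
  ⟨const_mem_polyCurves x, fun s _ => ⟨1, one_ne_zero, by
    rw [quadExp_apply_of_apply_eq_zero hx, one_smul]⟩⟩

theorem linear {x : V} (hx : N (N x) = 0) : IsExpLimitCurve N x fun s : k => s • x + N x := by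
  refine ⟨linear_mem_polyCurves x (N x), fun s hs => ⟨s, hs, ?_⟩⟩
  rw [quadExp_apply, hx]
  match_scalars <;> field_simp

theorem quadratic [NeZero (2 : k)] (x : V) :
    IsExpLimitCurve N x fun s : k => s ^ 2 • (2 : k) • x + (s • (2 : k) • N x + N (N x)) := by
  have h2 : (2 : k) ≠ 0 := NeZero.ne _
  refine ⟨quadratic_mem_polyCurves _ _ _, fun s hs =>
    ⟨2 * s ^ 2, mul_ne_zero h2 (pow_ne_zero 2 hs), ?_⟩⟩
  rw [quadExp_apply]
  match_scalars <;> field_simp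

end IsExpLimitCurve

variable [NeZero (2 : k)]

theorem quadExp_apply_quadExp_neg (hN : ∀ x, N (N (N x)) = 0) (t : k) (x : V) :
    quadExp N t (quadExp N (-t) x) = x := by
  have h2 : (2 : k) ≠ 0 := NeZero.ne _
  simp only [quadExp_apply, map_add, map_smul, hN, map_zero, smul_zero, add_zero]
  match_scalars <;> field_simp <;> ring

theorem quadExp_injective (hN : ∀ x, N (N (N x)) = 0) (t : k) :
    Function.Injective (quadExp N t) :=
  Function.LeftInverse.injective (g := quadExp N (-t)) fun x => by
    simpa using quadExp_apply_quadExp_neg hN (-t) x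

end QuadExp

section Derivation

variable {k L : Type*} [Field k] [LieRing L] [LieAlgebra k L] {D : LieDerivation k L L}

theorem lie_sq_apply_add_lie_apply_sq [NeZero (3 : k)] (hD : ∀ x, D (D (D x)) = 0) (x y : L) :
    ⁅D (D x), D y⁆ + ⁅D x, D (D y)⁆ = 0 := by
  have h := hD ⁅x, y⁆
  simp only [LieDerivation.apply_lie_eq_add, map_add, hD, zero_lie, lie_zero] at h
  refine (smul_eq_zero_iff_right (NeZero.ne (3 : k))).mp ?_
  rw [← h]
  module

theorem lie_sq_apply_sq_apply [NeZero (3 : k)] (hD : ∀ x, D (D (D x)) = 0) (x y : L) :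
    ⁅D (D x), D (D y)⁆ = 0 := by
  simpa [hD] using lie_sq_apply_add_lie_apply_sq hD (D x) y

variable [NeZero (2 : k)] [NeZero (3 : k)]

theorem quadExp_lie (hD : ∀ x, D (D (D x)) = 0) (t : k) (x y : L) :
    quadExp (D : L →ₗ[k] L) t ⁅x, y⁆ =
      ⁅quadExp (D : L →ₗ[k] L) t x, quadExp (D : L →ₗ[k] L) t y⁆ := by
  have h2 : (2 : k) ≠ 0 := NeZero.ne _
  have h3 := eq_neg_of_add_eq_zero_left (lie_sq_apply_add_lie_apply_sq hD x y)
  simp only [quadExp_apply, LieDerivation.coeFn_coe, LieDerivation.apply_lie_eq_add, map_add,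
    lie_add, add_lie, lie_smul, smul_lie, lie_sq_apply_sq_apply hD, h3, smul_zero]
  match_scalars <;> field_simp <;> ring

theorem ad_quadExp_pow_quadExp (hD : ∀ x, D (D (D x)) = 0) (t : k) (x v : L) (n : ℕ) :
    (ad k L (quadExp (D : L →ₗ[k] L) t x) ^ n) (quadExp (D : L →ₗ[k] L) t v) =
      quadExp (D : L →ₗ[k] L) t ((ad k L x ^ n) v) := by
  induction n with
  | zero => rfl
  | succ n ih =>
    rw [pow_succ', pow_succ', Module.End.mul_apply, Module.End.mul_apply, ih, LieAlgebra.ad_apply,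
      LieAlgebra.ad_apply, quadExp_lie hD]

theorem ad_quadExp_pow_eq_zero (hD : ∀ x, D (D (D x)) = 0) (t : k) {x : L} {n : ℕ}
    (h : ad k L x ^ n = 0) : ad k L (quadExp (D : L →ₗ[k] L) t x) ^ n = 0 := by
  ext v
  rw [← quadExp_apply_quadExp_neg (N := (D : L →ₗ[k] L)) hD t v, ad_quadExp_pow_quadExp hD, h,
    LinearMap.zero_apply, LinearMap.zero_apply, map_zero]

theorem IsElemPair.map_quadExp {p : ℕ} {x y : L} (g : IsElemPair p k x y)
    (hD : ∀ x, D (D (D x)) = 0) (t : k) :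
    IsElemPair p k (quadExp (D : L →ₗ[k] L) t x) (quadExp (D : L →ₗ[k] L) t y) where
  linearIndependent := (linearIndependent_map_pair_iff _
    (quadExp_injective (N := (D : L →ₗ[k] L)) hD t)).mpr g.linearIndependent
  lie_eq_zero := by rw [← quadExp_lie hD, g.lie_eq_zero, map_zero]
  left_pow := ad_quadExp_pow_eq_zero hD t g.left_pow
  right_pow := ad_quadExp_pow_eq_zero hD t g.right_pow

end Derivation

end Exponential

section ExponentialLimits

namespace IsElemPair

variable {k L : Type} [Field k] [LieRing L] [LieAlgebra k L] [Infinite k] [NeZero (2 : k)]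
  [NeZero (3 : k)] {p : ℕ} [Fact p.Prime] [CharP k p] {D : LieDerivation k L L} {u x y : L}

theorem linked_limit (g : IsElemPair p k x y) (hD : ∀ x, D (D (D x)) = 0) {X Y : k → L}
    (hX : IsExpLimitCurve (D : L →ₗ[k] L) x X) (hY : Y ∈ polyCurves k L)
    (hYs : ∀ s, s ≠ 0 → ∃ b d : k, b ≠ 0 ∧
      Y s = d • quadExp (D : L →ₗ[k] L) s⁻¹ x + b • quadExp (D : L →ₗ[k] L) s⁻¹ y)
    (h₀ : LinearIndependent k ![X 0, Y 0]) :
    IsElemPair p k (X 0) (Y 0) ∧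
      Linked (elemPlanes p k L) (plane k x y) (plane k (X 0) (Y 0)) := by
  let E : k → L →ₗ[k] L := quadExp (D : L →ₗ[k] L)
  have hne : ∀ s, s ≠ 0 →
      IsElemPair p k (X s) (Y s) ∧ plane k (X s) (Y s) = plane k (E s⁻¹ x) (E s⁻¹ y) := by
    intro s hs
    obtain ⟨a, ha, hXa⟩ := hX.exists_eq_smul s hs
    obtain ⟨b, d, hb, hYb⟩ := hYs s hs
    rw [hXa, hYb]
    exact (g.map_quadExp hD s⁻¹).smul_smul_add_smul ha hb
  have hall := isElemPair_of_forall_ne_zero hX.mem_polyCurves hY (fun s hs => (hne s hs).1) h₀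
  have hexp : Linked (elemPlanes p k L) (plane k (E 0 x) (E 0 y)) (plane k (E 1 x) (E 1 y)) :=
    linked_of_mem_polyCurves (quadExp_mem_polyCurves _ x) (quadExp_mem_polyCurves _ y)
      (g.map_quadExp hD) 0 1
  have hlim := linked_of_mem_polyCurves hX.mem_polyCurves hY hall 1 0
  rw [(hne 1 one_ne_zero).2, inv_one] at hlim
  rw [quadExp_zero_apply, quadExp_zero_apply] at hexp
  exact ⟨hall 0, hexp.trans hlim⟩

theorem linked_limit_of_isExpLimitCurve (g : IsElemPair p k x y) (hD : ∀ x, D (D (D x)) = 0)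
    {X Y : k → L} (hX : IsExpLimitCurve (D : L →ₗ[k] L) x X)
    (hY : IsExpLimitCurve (D : L →ₗ[k] L) y Y) (h₀ : LinearIndependent k ![X 0, Y 0]) :
    IsElemPair p k (X 0) (Y 0) ∧
      Linked (elemPlanes p k L) (plane k x y) (plane k (X 0) (Y 0)) := by
  refine g.linked_limit hD hX hY.mem_polyCurves (fun s hs => ?_) h₀
  obtain ⟨b, hb, hYb⟩ := hY.exists_eq_smul s hs
  exact ⟨b, 0, hb, by rw [zero_smul, zero_add, hYb]⟩

theorem linked_sq_sq (g : IsElemPair p k x y) (hD : ∀ x, D (D (D x)) = 0)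
    (h : LinearIndependent k ![D (D x), D (D y)]) :
    IsElemPair p k (D (D x)) (D (D y)) ∧
      Linked (elemPlanes p k L) (plane k x y) (plane k (D (D x)) (D (D y))) := by
  simpa using g.linked_limit_of_isExpLimitCurve hD (.quadratic x) (.quadratic y) (by simpa using h)

theorem linked_apply_apply (g : IsElemPair p k x y) (hD : ∀ x, D (D (D x)) = 0)
    (hx : D (D x) = 0) (hy : D (D y) = 0) (h : LinearIndependent k ![D x, D y]) :
    IsElemPair p k (D x) (D y) ∧
      Linked (elemPlanes p k L) (plane k x y) (plane k (D x) (D y)) := by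
  simpa using g.linked_limit_of_isExpLimitCurve hD (.linear hx) (.linear hy) (by simpa using h)

theorem linked_sq_apply (g : IsElemPair p k x y) (hD : ∀ x, D (D (D x)) = 0)
    (hy : D (D y) = 0) (h : LinearIndependent k ![D (D x), D y]) :
    IsElemPair p k (D (D x)) (D y) ∧
      Linked (elemPlanes p k L) (plane k x y) (plane k (D (D x)) (D y)) := by
  simpa using g.linked_limit_of_isExpLimitCurve hD (.quadratic x) (.linear hy) (by simpa using h)

/-- The vector `y - (2 * l) • D x` is the limit of `quadExp D s⁻¹ y` at `s = 0` once its pole has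
been cancelled by a multiple of `quadExp D s⁻¹ x`. -/
theorem linked_sq_sub (g : IsElemPair p k x y) (hD : ∀ x, D (D (D x)) = 0)
    {l : k} (hy : l • D (D x) = D y)
    (h : LinearIndependent k ![D (D x), y - (2 * l) • D x]) :
    IsElemPair p k (D (D x)) (y - (2 * l) • D x) ∧
      Linked (elemPlanes p k L) (plane k x y) (plane k (D (D x)) (y - (2 * l) • D x)) := by
  have h2 : (2 : k) ≠ 0 := NeZero.ne _
  simpa using g.linked_limit hD (.quadratic x)
    (linear_mem_polyCurves (-(2 * l) • x) (y - (2 * l) • D x))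
    (fun s hs => ⟨1, -(2 * l * s), one_ne_zero, by
      simp only [quadExp_apply, LieDerivation.coeFn_coe, ← hy, map_smul, hD, smul_zero]
      match_scalars <;> field_simp
      ring⟩)
    (by simpa using h)

theorem exists_linked_apply_eq_zero_of_sq_eq_zero (g : IsElemPair p k x y)
    (hD : ∀ x, D (D (D x)) = 0) (hx : D (D x) = 0) (hy : D (D y) = 0) :
    ∃ u v, IsElemPair p k u v ∧ D u = 0 ∧
      Linked (elemPlanes p k L) (plane k x y) (plane k u v) := by
  rcases g.linearIndependent_map_or_exists_map_eq_zero (D : L →ₗ[k] L) with h | ⟨z, w, gz, hzw, hz⟩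
  · obtain ⟨g', hl⟩ := g.linked_apply_apply hD hx hy h
    exact ⟨D x, D y, g', hx, hl⟩
  · exact ⟨z, w, gz, hz, hzw ▸ Linked.refl gz.mem_elemPlanes⟩

theorem exists_linked_apply_eq_zero_of_sq_right_eq_zero (g : IsElemPair p k x y)
    (hD : ∀ x, D (D (D x)) = 0) (hx : D (D x) ≠ 0) (hy : D (D y) = 0) :
    ∃ u v, IsElemPair p k u v ∧ D u = 0 ∧
      Linked (elemPlanes p k L) (plane k x y) (plane k u v) := by
  by_cases hli : LinearIndependent k ![D (D x), D y]
  · obtain ⟨g', hl⟩ := g.linked_sq_apply hD hy hli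
    exact ⟨_, _, g', hD x, hl⟩
  obtain ⟨l, hl⟩ := not_forall_not.mp (mt (LinearIndependent.pair_iff' hx).mpr hli)
  by_cases hli' : LinearIndependent k ![D (D x), y - (2 * l) • D x]
  · obtain ⟨g', hl'⟩ := g.linked_sq_sub hD hl hli'
    exact ⟨_, _, g', hD x, hl'⟩
  obtain ⟨m, hm⟩ := not_forall_not.mp (mt (LinearIndependent.pair_iff' hx).mpr hli')
  have hl0 : l = 0 := by
    have h : l • D (D x) = (2 * l) • D (D x) := by
      have := congrArg D hm
      rw [map_smul, hD, smul_zero, map_sub, map_smul, ← hl] at this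
      exact sub_eq_zero.mp this.symm
    rw [two_mul, add_smul, left_eq_add] at h
    exact (smul_eq_zero.mp h).resolve_right hx
  rw [hl0, zero_smul] at hl
  refine ⟨y, x, g.swap, hl.symm, ?_⟩
  rw [plane_comm x y]
  exact Linked.refl g.swap.mem_elemPlanes

theorem exists_linked_apply_eq_zero (g : IsElemPair p k x y) (hD : ∀ x, D (D (D x)) = 0) :
    ∃ u v, IsElemPair p k u v ∧ D u = 0 ∧
      Linked (elemPlanes p k L) (plane k x y) (plane k u v) := by
  rcases g.linearIndependent_map_or_exists_map_eq_zero ((D : L →ₗ[k] L) ∘ₗ (D : L →ₗ[k] L)) with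
    h | ⟨z, w, gz, hzw, hz⟩
  · obtain ⟨g', hl⟩ := g.linked_sq_sq hD h
    exact ⟨_, _, g', hD x, hl⟩
  · rw [← hzw, plane_comm]
    by_cases hw : D (D w) = 0
    · exact gz.swap.exists_linked_apply_eq_zero_of_sq_eq_zero hD hw hz
    · exact gz.swap.exists_linked_apply_eq_zero_of_sq_right_eq_zero hD hw hz

theorem linked_left_sq (g : IsElemPair p k u y) (hD : ∀ x, D (D (D x)) = 0) (hu : D u = 0)
    (h : LinearIndependent k ![u, D (D y)]) :
    IsElemPair p k u (D (D y)) ∧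
      Linked (elemPlanes p k L) (plane k u y) (plane k u (D (D y))) := by
  simpa using g.linked_limit_of_isExpLimitCurve hD (.const hu) (.quadratic y) (by simpa using h)

theorem linked_left_apply (g : IsElemPair p k u y) (hD : ∀ x, D (D (D x)) = 0) (hu : D u = 0)
    {l : k} (hy : l • u = D (D y)) (h : LinearIndependent k ![u, D y]) :
    IsElemPair p k u (D y) ∧ Linked (elemPlanes p k L) (plane k u y) (plane k u (D y)) := by
  have h2 : (2 : k) ≠ 0 := NeZero.ne _
  have hEu (s : k) : quadExp (D : L →ₗ[k] L) s u = u := quadExp_apply_of_apply_eq_zero hu s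
  simpa using g.linked_limit hD (.const hu) (linear_mem_polyCurves y (D y))
    (fun s hs => ⟨s, -(s⁻¹ * 2⁻¹ * l), hs, by
      rw [hEu]
      simp only [quadExp_apply, LieDerivation.coeFn_coe, ← hy]
      match_scalars <;> field_simp
      ring⟩)
    (by simpa using h)

theorem exists_linked_apply_eq_smul (g : IsElemPair p k u y) (hD : ∀ x, D (D (D x)) = 0)
    (hu : D u = 0) :
    ∃ (v : L) (l : k), IsElemPair p k u v ∧ D v = l • u ∧
      Linked (elemPlanes p k L) (plane k u y) (plane k u v) := by
  have hu0 : u ≠ 0 := g.linearIndependent.ne_zero 0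
  by_cases hli : LinearIndependent k ![u, D (D y)]
  · obtain ⟨g', hl⟩ := g.linked_left_sq hD hu hli
    exact ⟨D (D y), 0, g', by rw [hD, zero_smul], hl⟩
  obtain ⟨l, hl⟩ := not_forall_not.mp (mt (LinearIndependent.pair_iff' hu0).mpr hli)
  by_cases hli' : LinearIndependent k ![u, D y]
  · obtain ⟨g', hl'⟩ := g.linked_left_apply hD hu hl hli'
    exact ⟨D y, l, g', hl.symm, hl'⟩
  obtain ⟨m, hm⟩ := not_forall_not.mp (mt (LinearIndependent.pair_iff' hu0).mpr hli')
  exact ⟨y, m, g, hm.symm, Linked.refl g.mem_elemPlanes⟩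

end IsElemPair

end ExponentialLimits

section Normalizing

theorem linearIndependent_smul_add_smul_of_notMem_plane {k V : Type*} [Field k] [AddCommGroup V]
    [Module k V] {x y z : V} (h : LinearIndependent k ![x, y]) (hz : z ∉ plane k x y) {b d : k}
    (hbd : b ≠ 0 ∨ d ≠ 0) : LinearIndependent k ![x, b • y + d • z] := by
  have hx : x ≠ 0 := h.ne_zero 0
  refine (LinearIndependent.pair_iff' hx).mpr fun a ha => ?_
  have hd : d = 0 := by
    by_contra hd
    refine hz (mem_plane.mpr ⟨d⁻¹ * a, -(d⁻¹ * b), ?_⟩)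
    rw [mul_smul, ha, smul_add, smul_smul, smul_smul, inv_mul_cancel₀ hd]
    module
  rw [hd, zero_smul, add_zero] at ha
  have hb : b = 0 :=
    (LinearIndependent.pair_iff.mp h (-a) b (by rw [neg_smul, ha, neg_add_cancel])).2
  exact hbd.elim (· hb) (· hd)

theorem ad_add_pow_eq_zero {k L : Type*} [Field k] [LieRing L] [LieAlgebra k L] {p : ℕ}
    [Fact p.Prime] [CharP k p] (hp3 : 3 ≤ p) {v c : L} (hv : ad k L v ^ p = 0)
    (hc : ad k L c ^ p = 0) (hcv : ⁅⁅c, v⁆, v⁆ = 0) (hcc : ⁅⁅c, v⁆, c⁆ = 0) :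
    ad k L (v + c) ^ p = 0 := by
  nontriviality L
  have : CharP (Module.End k L) p := charP_end
  have hcomm : ad k L c * ad k L v = ad k L v * ad k L c + ad k L ⁅c, v⁆ := by
    ext w
    exact (leibniz_lie c v w).trans (add_comm _ _)
  rw [map_add, add_pow_of_central_commutator hp3 hcomm (commute_ad_of_lie_eq_zero hcv)
    (commute_ad_of_lie_eq_zero hcc), hv, hc, add_zero]

variable {k L : Type} [Field k] [LieRing L] [LieAlgebra k L] [Infinite k] {p : ℕ} [Fact p.Prime]
  [CharP k p] {c u v : L}

theorem IsElemPair.linked_of_normalizing (g : IsElemPair p k u v) (hp3 : 3 ≤ p)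
    (hc : ad k L c ^ p = 0) (hu : ⁅c, u⁆ = 0) {l : k} (hv : ⁅c, v⁆ = l • u)
    (hmem : c ∉ plane k u v) :
    IsElemPair p k u c ∧ Linked (elemPlanes p k L) (plane k u v) (plane k u c) := by
  have huc : ⁅u, c⁆ = 0 := by rw [← lie_skew, hu, neg_zero]
  have hpair (s : k) : IsElemPair p k u (s • v + (1 - s) • c) := by
    have hz : ⁅(1 - s) • c, s • v⁆ = ((1 - s) * s * l) • u := by
      rw [smul_lie, lie_smul, hv, smul_smul, smul_smul]
    refine ⟨linearIndependent_smul_add_smul_of_notMem_plane g.linearIndependent hmem ?_, ?_,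
      g.left_pow, ad_add_pow_eq_zero hp3 ?_ ?_ ?_ ?_⟩
    · by_contra! h
      exact one_ne_zero (sub_eq_zero.mp h.2 |>.trans h.1)
    · rw [lie_add, lie_smul, lie_smul, g.lie_eq_zero, huc, smul_zero, smul_zero, add_zero]
    · rw [map_smul, smul_pow, g.right_pow, smul_zero]
    · rw [map_smul, smul_pow, hc, smul_zero]
    · rw [hz, smul_lie, lie_smul, g.lie_eq_zero, smul_zero, smul_zero]
    · rw [hz, smul_lie, lie_smul, huc, smul_zero, smul_zero]
  have hcurve : (fun s : k => s • v + (1 - s) • c) ∈ polyCurves k L := by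
    convert linear_mem_polyCurves (v - c) c using 2 with s
    module
  exact ⟨by simpa using hpair 0,
    by simpa using linked_of_mem_polyCurves (const_mem_polyCurves u) hcurve hpair 1 0⟩

end Normalizing

section Connectedness

variable {k L : Type} [Field k] [LieRing L] [LieAlgebra k L] {p : ℕ}

section CubeZeroElement

variable {c u v x y : L}

theorem lieDerivation_ad_apply_apply_apply_eq_zero (hc : ad k L c ^ 3 = 0) (x : L) :
    LieDerivation.ad k L c (LieDerivation.ad k L c (LieDerivation.ad k L c x)) = 0 := by
  simp only [LieDerivation.ad_apply_apply]
  exact LinearMap.congr_fun hc x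

variable [Infinite k] [NeZero (2 : k)] [NeZero (3 : k)] [Fact p.Prime] [CharP k p]

theorem IsElemPair.linked_left_of_lie_eq_zero (g : IsElemPair p k u v) (hp3 : 3 ≤ p)
    (hc : ad k L c ^ 3 = 0) (hu : ⁅c, u⁆ = 0) (h : LinearIndependent k ![u, c]) :
    IsElemPair p k u c ∧ Linked (elemPlanes p k L) (plane k u v) (plane k u c) := by
  obtain ⟨w, l, gw, hw, hlink⟩ := g.exists_linked_apply_eq_smul
    (lieDerivation_ad_apply_apply_apply_eq_zero hc)
    ((LieDerivation.ad_apply_apply k L c u).trans hu)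
  rw [LieDerivation.ad_apply_apply] at hw
  by_cases hmem : c ∈ plane k u w
  · obtain ⟨gc, hplane⟩ := gw.of_mem h (left_mem_plane u w) hmem
    exact ⟨gc, hplane ▸ hlink⟩
  · obtain ⟨gc, hlink'⟩ :=
      gw.linked_of_normalizing hp3 (pow_eq_zero_of_le hp3 hc) hu hw hmem
    exact ⟨gc, hlink.trans hlink'⟩

theorem IsElemPair.exists_linked_left_eq (g : IsElemPair p k x y) (hp3 : 3 ≤ p)
    (hc : ad k L c ^ 3 = 0) (hc0 : c ≠ 0) :
    ∃ w, IsElemPair p k c w ∧ Linked (elemPlanes p k L) (plane k x y) (plane k c w) := by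
  obtain ⟨u, v, g', hu, hlink⟩ :=
    g.exists_linked_apply_eq_zero (lieDerivation_ad_apply_apply_apply_eq_zero hc)
  rw [LieDerivation.ad_apply_apply] at hu
  by_cases h : LinearIndependent k ![u, c]
  · obtain ⟨gc, hlink'⟩ := g'.linked_left_of_lie_eq_zero hp3 hc hu h
    exact ⟨u, gc.swap, plane_comm (k := k) u c ▸ hlink.trans hlink'⟩
  · obtain ⟨a, rfl⟩ := not_forall_not.mp
      (mt (LinearIndependent.pair_iff' (g'.linearIndependent.ne_zero 0)).mpr h)
    obtain ⟨w, gw, hplane⟩ :=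
      g'.exists_left (Submodule.smul_mem _ a (left_mem_plane u v)) hc0
    exact ⟨w, gw, hplane ▸ hlink⟩

theorem isPreconnected_elemPlanes {c' : L} (hp3 : 3 ≤ p) (hcc' : IsCubeZeroPair k c c') :
    @IsPreconnected _ (planeTop (elemPlanes p k L)) Set.univ := by
  have g : IsElemPair p k c c' := ⟨hcc'.linearIndependent, hcc'.lie_eq_zero,
    pow_eq_zero_of_le hp3 hcc'.left_cube, pow_eq_zero_of_le hp3 hcc'.right_cube⟩
  refine isPreconnected_univ_of_linked g.mem_elemPlanes ?_
  rintro _ ⟨x, y, gxy, rfl⟩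
  obtain ⟨w, gw, hlink⟩ :=
    gxy.exists_linked_left_eq hp3 hcc'.left_cube (hcc'.linearIndependent.ne_zero 0)
  exact hlink.trans (gw.linked_left_of_lie_eq_zero hp3 hcc'.right_cube g.swap.lie_eq_zero
    g.linearIndependent).2

end CubeZeroElement

section RestrictedStructure

variable (P : pStructure p k L) (hcenter : LieAlgebra.center k L = ⊥)
include hcenter

theorem pmap_eq_zero_iff (x : L) : P.pmap x = 0 ↔ ad k L x ^ p = 0 := by
  have : LieModule.IsFaithful k L L := (LieAlgebra.isFaithful_self_iff k L).mpr hcenter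
  have had : ad k L (P.pmap x) = ad k L x ^ p := LinearMap.ext (P.ad_pmap x)
  rw [← had]
  exact (LieModule.toEnd_eq_zero_iff k L L).symm

theorem elemSet_univ_two_eq_elemPlanes [Fact p.Prime] [CharP k p] :
    P.elemSet Set.univ 2 = elemPlanes p k L := by
  ext e
  constructor
  · rintro ⟨-, hrank, habelian, hpmap⟩
    obtain ⟨x, hx, hx0⟩ := (Submodule.ne_bot_iff e).mp (by rintro rfl; simp at hrank)
    obtain ⟨y, hy, hxy⟩ := exists_linearIndependent_of_mem hrank hx hx0
    exact ⟨x, y, ⟨hxy, habelian x hx y hy, (pmap_eq_zero_iff P hcenter x).mp (hpmap x hx),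
      (pmap_eq_zero_iff P hcenter y).mp (hpmap y hy)⟩, plane_eq_of_mem hrank hxy hx hy⟩
  · rintro ⟨x, y, g, rfl⟩
    exact ⟨Set.subset_univ _, finrank_plane g.linearIndependent,
      fun z hz w hw => g.lie_eq_zero_of_mem hz hw,
      fun z hz => (pmap_eq_zero_iff P hcenter z).mpr (g.ad_pow_eq_zero hz)⟩

end RestrictedStructure

end Connectedness

end ElemAb

theorem statement4_general {p : ℕ} [Fact p.Prime] (hp3 : 3 ≤ p) {k : Type} [Field k] [Infinite k]
    [CharP k p] {L : Type} [LieRing L] [LieAlgebra k L] (P : pStructure p k L)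
    (hL : IsClassicalSemisimple k L) : P.EIsConnected Set.univ := by
  have : NeZero (2 : k) := ⟨by exact_mod_cast natCast_ne_zero_of_lt (k := k) two_pos hp3⟩
  rw [pStructure.EIsConnected, elemSet_univ_two_eq_elemPlanes P hL.center_eq_bot]
  rcases hL.exists_isCubeZeroPair_or_not_linearIndependent p with ⟨hp5, c, c', hcc'⟩ | hno
  · have : NeZero (3 : k) := ⟨by exact_mod_cast natCast_ne_zero_of_lt (k := k) three_pos (by omega)⟩
    exact isPreconnected_elemPlanes hp3 hcc'
  · have : IsEmpty (elemPlanes p k L) :=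
      ⟨fun ⟨_, x, y, g, _⟩ => hno x y g.lie_eq_zero g.linearIndependent⟩
    rw [Set.univ_eq_empty_iff.mpr this]
    exact @isPreconnected_empty _ (planeTop _)

/-- If `g` is a classical semisimple restricted Lie algebra, then the
variety `E(2,g)` is connected. -/
theorem statement4
    (p : ℕ) (hp : p.Prime) (hp3 : 3 ≤ p)
    (k : Type) [Field k] [IsAlgClosed k] [CharP k p]
    (L : Type) [LieRing L] [LieAlgebra k L] [FiniteDimensional k L]
    (P : pStructure p k L)
    (hcl : IsClassicalSemisimple k L) :
    P.EIsConnected Set.univ := by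
  have : Fact p.Prime := ⟨hp⟩
  exact statement4_general hp3 P hcl
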